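/- arXiv:1302.3961 — 2 statements merged into one kernel-verified Lean document; each statement's English description precedes it below -/
import Mathlib

section
/- Let p > 1. There exists a constant c_p > 0 depending only on p such that for every u ∈ C_c^∞((0,1)) and every D ≥ 1, one has sup_{x ∈ (0,1)} { |u(x)| · x^{1/p − 1} · X^{1/p}(x/D) } ≤ c_p · ( ∫_0^1 |u'(t)|^p dt − ((p−1)/p)^p ∫_0^1 |u(t)|^p / t^p dt )^{1/p}. -/
open MeasureTheory Metric Set

/-!
The sharp Hardy inequality on `(0, b)` is calibrated by the flux `G t = |u t| ^ p * t ^ (1 - p)`: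
with `H = (p - 1) / p` and `W t = |u t| ^ p / t ^ p`, wherever `u` does not vanish the remainder
`|u'| ^ p - H ^ p * W - H ^ (p - 1) * G'` equals `H ^ p * W` times the gap in Bernoulli's inequality
`|r| ^ p ≥ 1 + p * (r - 1)`, where `r` is the ratio of `u'` to the slope `H * u / t` of the virtual
extremal `t ^ H`. The weight `X` solves the Riccati equation `X' = X ^ 2 / t`, so
`-(G * X)' = W * ((p - 1) * (1 - r) * X - X ^ 2)`; completing the square for `r ∈ [0, 1]` bounds
this by a multiple of the remainder, and integrating over `(x, b)` gives the estimate for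
`G x * X x`. The boundary term at `b` has a favourable sign, and the one at `0` vanishes by Morrey's
bound `G t ≤ ∫ s in 0..t, |u' s| ^ p`.
-/

/-- The gap in Bernoulli's inequality `1 + p * (r - 1) ≤ |r| ^ p`, that is, the Bregman divergence
of `|·| ^ p` from the base point `1`. -/
noncomputable def bernoulliGap (p r : ℝ) : ℝ := |r| ^ p - p * r + p - 1

/-- The logarithmic weight `X` of the improved Hardy inequalities. -/
noncomputable def logWeight (t : ℝ) : ℝ := (1 - Real.log t)⁻¹

/-- The flux whose derivative calibrates the Hardy inequality. -/
noncomputable def hardyFlux (p : ℝ) (u : ℝ → ℝ) (t : ℝ) : ℝ := |u t| ^ p * t ^ (1 - p)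

/-- The integrand of the Hardy difference. -/
noncomputable def hardyDensity (p : ℝ) (u : ℝ → ℝ) (t : ℝ) : ℝ :=
  |deriv u t| ^ p - ((p - 1) / p) ^ p * (|u t| ^ p / t ^ p)

/-- The slope of `u` relative to that of the virtual extremal `t ^ ((p - 1) / p)` of the Hardy
inequality. Where `u` vanishes this is `0` by the convention for division, which is harmless since
it only occurs multiplied by `|u t| ^ p`. -/
noncomputable def hardySlope (p : ℝ) (u : ℝ → ℝ) (t : ℝ) : ℝ :=
  deriv u t / ((p - 1) / p * (u t / t))

/-- The constant in front of the Hardy difference in the bound on the weighted flux. Its factor `p`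
is large enough both for completing the square and for the boundary term at the right end point. -/
noncomputable def hardyMorreyConst (p : ℝ) : ℝ := p / ((p - 1) / p) ^ p

section BernoulliGap

variable {p r : ℝ}

lemma bernoulliGap_nonneg (hp : 1 ≤ p) (r : ℝ) : 0 ≤ bernoulliGap p r := by
  have bernoulli : 1 + p * (|r| - 1) ≤ |r| ^ p := by
    simpa using one_add_mul_self_le_rpow_one_add (s := |r| - 1) (by linarith [abs_nonneg r]) hp
  have : p * r ≤ p * |r| := by gcongr; exact le_abs_self r
  unfold bernoulliGap
  linarith

lemma rpow_le_one_sub_div_mul {q s : ℝ} (hq : 0 ≤ q) (hs₀ : 0 ≤ s) (hs₁ : s ≤ 1) :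
    s ^ q ≤ 1 - q / (q + 1) * (1 - s) :=
  calc s ^ q ≤ s ^ (q / (q + 1)) :=
        Real.rpow_le_rpow_of_exponent_ge' hs₀ hs₁ (by positivity) (div_le_self hq (by linarith))
    _ = (1 + (s - 1)) ^ (q / (q + 1)) := by rw [add_sub_cancel]
    _ ≤ 1 + q / (q + 1) * (s - 1) :=
        rpow_one_add_le_one_add_mul_self (by linarith) (by positivity)
          (div_le_one_of_le₀ (by linarith) (by linarith))
    _ = 1 - q / (q + 1) * (1 - s) := by ring

lemma half_mul_sq_le_bernoulliGap (hp : 1 ≤ p) (hr₀ : 0 ≤ r) (hr₁ : r ≤ 1) :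
    (p - 1) / 2 * (1 - r) ^ 2 ≤ bernoulliGap p r := by
  let f : ℝ → ℝ := fun s => s ^ p - p * s + p - 1 - (p - 1) / 2 * (1 - s) ^ 2
  have hf (s : ℝ) : HasDerivAt f (p * s ^ (p - 1) - p + (p - 1) * (1 - s)) s := by
    have hpow := Real.hasDerivAt_rpow_const (x := s) (Or.inr hp)
    have hsq := (((hasDerivAt_id s).const_sub 1).pow 2).const_mul ((p - 1) / 2)
    refine (((hpow.sub ((hasDerivAt_id s).const_mul p)).add_const p).sub_const 1).sub hsq
      |>.congr_deriv ?_
    simp only [id_eq, Nat.cast_ofNat, Nat.add_one_sub_one, pow_one]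
    ring
  have hf_nonpos (s : ℝ) (hs : s ∈ interior (Icc (0 : ℝ) 1)) :
      p * s ^ (p - 1) - p + (p - 1) * (1 - s) ≤ 0 := by
    rw [interior_Icc] at hs
    have hrpow := rpow_le_one_sub_div_mul (sub_nonneg.2 hp) hs.1.le hs.2.le
    have hcancel : p * ((p - 1) / (p - 1 + 1) * (1 - s)) = (p - 1) * (1 - s) := by
      rw [sub_add_cancel]; field_simp
    linarith [mul_le_mul_of_nonneg_left hrpow (zero_le_one.trans hp)]
  have hanti : AntitoneOn f (Icc 0 1) :=
    antitoneOn_of_hasDerivWithinAt_nonpos (convex_Icc 0 1)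
      (fun s _ => (hf s).continuousAt.continuousWithinAt)
      (fun s _ => (hf s).hasDerivWithinAt) hf_nonpos
  have hfr : f 1 ≤ f r := hanti ⟨hr₀, hr₁⟩ ⟨zero_le_one, le_rfl⟩ hr₁
  have hf₁ : f 1 = 0 := by simp [f]
  rw [bernoulliGap, abs_of_nonneg hr₀]
  exact sub_nonneg.1 (hf₁ ▸ hfr)

lemma mul_one_sub_le_bernoulliGap (hr : r ≤ 0) : (p - 1) * (1 - r) ≤ bernoulliGap p r := by
  have : 0 ≤ |r| ^ p := by positivity
  unfold bernoulliGap
  linarith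

lemma mul_one_sub_mul_sub_sq_le_bernoulliGap {X : ℝ} (hp : 1 ≤ p) (r : ℝ) (hX₀ : 0 ≤ X)
    (hX₁ : X ≤ 1) : (p - 1) * (1 - r) * X - X ^ 2 ≤ p * bernoulliGap p r := by
  have hq : 0 ≤ p - 1 := sub_nonneg.2 hp
  have hgap : bernoulliGap p r ≤ p * bernoulliGap p r :=
    le_mul_of_one_le_left (bernoulliGap_nonneg hp r) hp
  rcases le_total 1 r with hr | hr
  · have : 0 ≤ (p - 1) * (r - 1) * X := mul_nonneg (mul_nonneg hq (sub_nonneg.2 hr)) hX₀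
    linarith [sq_nonneg X, bernoulliGap_nonneg hp r]
  rcases le_total 0 r with hr₀ | hr₀
  · calc (p - 1) * (1 - r) * X - X ^ 2
        = ((p - 1) * (1 - r)) ^ 2 / 4 - ((p - 1) * (1 - r) / 2 - X) ^ 2 := by ring
      _ ≤ (p - 1) * (p - 1) / 4 * (1 - r) ^ 2 := by
        linarith [sq_nonneg ((p - 1) * (1 - r) / 2 - X)]
      _ ≤ p * (p - 1) / 2 * (1 - r) ^ 2 := by
        gcongr ?_ * _
        linarith [mul_nonneg hq hq]
      _ = p * ((p - 1) / 2 * (1 - r) ^ 2) := by ring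
      _ ≤ p * bernoulliGap p r := by
        gcongr
        exact half_mul_sq_le_bernoulliGap hp hr₀ hr
  · have : (p - 1) * (1 - r) * X ≤ (p - 1) * (1 - r) :=
      mul_le_of_le_one_right (mul_nonneg hq (by linarith)) hX₁
    linarith [sq_nonneg X, mul_one_sub_le_bernoulliGap (p := p) hr₀]

lemma abs_rpow_mul_bernoulliGap_le (hp : p ≠ 0) (c z : ℝ) :
    |c| ^ p * bernoulliGap p (z / c) ≤ |z| ^ p - |c| ^ p * (p * (z / c) - (p - 1)) := by
  have hz : |c| ^ p * |z / c| ^ p ≤ |z| ^ p := by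
    rw [← Real.mul_rpow (abs_nonneg _) (abs_nonneg _), ← abs_mul]
    rcases eq_or_ne c 0 with rfl | hc
    · simp only [zero_mul, abs_zero, Real.zero_rpow hp]
      positivity
    · rw [mul_div_cancel₀ z hc]
  unfold bernoulliGap
  linarith

end BernoulliGap

section LogWeight

variable {t : ℝ}

lemma one_le_one_sub_log (ht₀ : 0 ≤ t) (ht₁ : t ≤ 1) : 1 ≤ 1 - Real.log t := by
  linarith [Real.log_nonpos ht₀ ht₁]

lemma logWeight_nonneg (ht₀ : 0 ≤ t) (ht₁ : t ≤ 1) : 0 ≤ logWeight t :=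
  inv_nonneg.2 (zero_le_one.trans (one_le_one_sub_log ht₀ ht₁))

lemma logWeight_le_one (ht₀ : 0 ≤ t) (ht₁ : t ≤ 1) : logWeight t ≤ 1 :=
  inv_le_one_of_one_le₀ (one_le_one_sub_log ht₀ ht₁)

lemma hasDerivAt_logWeight_div {D : ℝ} (ht : 0 < t) (htD : t ≤ D) :
    HasDerivAt (fun s => logWeight (s / D)) (logWeight (t / D) ^ 2 / t) t := by
  have hD : 0 < D := ht.trans_le htD
  have hne : 1 - Real.log (t / D) ≠ 0 :=
    (zero_lt_one.trans_le (one_le_one_sub_log (by positivity) (div_le_one_of_le₀ htD hD.le))).ne'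
  refine ((((hasDerivAt_id t).div_const D).log (by positivity)).const_sub 1).inv hne
    |>.congr_deriv ?_
  simp only [logWeight, id_eq]
  field_simp

end LogWeight

section Flux

variable {p t : ℝ} {u : ℝ → ℝ}

lemma hardyFlux_nonneg (ht : 0 ≤ t) : 0 ≤ hardyFlux p u t := by
  unfold hardyFlux
  positivity

lemma hardyFlux_of_eq_zero (hp : p ≠ 0) (h : u t = 0) : hardyFlux p u t = 0 := by
  simp [hardyFlux, h, hp]

lemma hardyFlux_div_self (ht : 0 < t) : hardyFlux p u t / t = |u t| ^ p / t ^ p := by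
  rw [hardyFlux, Real.rpow_sub ht, Real.rpow_one]
  field_simp

lemma abs_mul_rpow_eq_hardyFlux_rpow (hp : p ≠ 0) (ht : 0 ≤ t) :
    |u t| * t ^ (1 / p - 1) = hardyFlux p u t ^ (1 / p) := by
  have hexp : (1 - p) * (1 / p) = 1 / p - 1 := by field_simp
  rw [hardyFlux, Real.mul_rpow (by positivity) (by positivity), ← Real.rpow_mul (abs_nonneg _),
    ← Real.rpow_mul ht, mul_one_div_cancel hp, Real.rpow_one, hexp]

lemma hasDerivAt_hardyFlux (hp : 1 < p) (ht : 0 < t) (hu : DifferentiableAt ℝ u t) :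
    HasDerivAt (hardyFlux p u) ((p - 1) * (|u t| ^ p / t ^ p) * (hardySlope p u t - 1)) t := by
  have hp₀ : p ≠ 0 := by linarith
  have hp₁ : p - 1 ≠ 0 := by linarith
  refine (((hasDerivAt_abs_rpow (u t) hp).comp t hu.hasDerivAt).mul
    (Real.hasDerivAt_rpow_const (Or.inl ht.ne'))).congr_deriv ?_
  simp only [Function.comp_apply]
  rcases eq_or_ne (u t) 0 with h₀ | h₀
  · simp [h₀, hp₀]
  have hsq : |u t| ^ p = |u t| ^ (p - 2) * u t ^ 2 := by
    rw [← sq_abs, ← Real.rpow_natCast, ← Real.rpow_add (abs_pos.2 h₀)]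
    norm_num
  rw [hardySlope, hsq, sub_sub_cancel_left, sub_eq_add_neg 1 p, Real.rpow_add ht, Real.rpow_one,
    Real.rpow_neg ht.le]
  field_simp
  ring

lemma rpow_mul_bernoulliGap_le_hardyDensity_sub (hp : 1 < p) (ht : 0 ≤ t) :
    ((p - 1) / p) ^ p * (|u t| ^ p / t ^ p) * bernoulliGap p (hardySlope p u t) ≤
      hardyDensity p u t - ((p - 1) / p) ^ (p - 1) *
        ((p - 1) * (|u t| ^ p / t ^ p) * (hardySlope p u t - 1)) := by
  have hp₀ : 0 < p := by linarith
  have hH : 0 < (p - 1) / p := div_pos (by linarith) hp₀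
  have hslope : |(p - 1) / p * (u t / t)| ^ p = ((p - 1) / p) ^ p * (|u t| ^ p / t ^ p) := by
    rw [abs_mul, abs_of_pos hH, abs_div, abs_of_nonneg ht, Real.mul_rpow hH.le (by positivity),
      Real.div_rpow (abs_nonneg _) ht]
  have hHpow : ((p - 1) / p) ^ (p - 1) * (p - 1) = p * ((p - 1) / p) ^ p := by
    rw [Real.rpow_sub_one hH.ne', div_mul_eq_mul_div, div_eq_iff hH.ne']
    field_simp
  have hgap := abs_rpow_mul_bernoulliGap_le hp₀.ne' ((p - 1) / p * (u t / t)) (deriv u t)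
  rw [hslope, ← hardySlope] at hgap
  rw [hardyDensity]
  linear_combination hgap + (|u t| ^ p / t ^ p) * (hardySlope p u t - 1) * hHpow

lemma rpow_mul_deriv_hardyFlux_le_hardyDensity (hp : 1 < p) (ht : 0 < t)
    (hu : DifferentiableAt ℝ u t) :
    ((p - 1) / p) ^ (p - 1) * deriv (hardyFlux p u) t ≤ hardyDensity p u t := by
  have hgap := rpow_mul_bernoulliGap_le_hardyDensity_sub (u := u) hp ht.le
  have hgap₀ : 0 ≤ bernoulliGap p (hardySlope p u t) := bernoulliGap_nonneg hp.le _
  have : 0 ≤ (p - 1) / p := div_nonneg (by linarith) (by linarith)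
  rw [(hasDerivAt_hardyFlux hp ht hu).deriv]
  exact sub_nonneg.1 (hgap.trans' (by positivity))

lemma hardyMorreyConst_pos (hp : 1 < p) : 0 < hardyMorreyConst p := by
  have : 0 < (p - 1) / p := div_pos (by linarith) (by linarith)
  unfold hardyMorreyConst
  positivity

lemma one_le_hardyMorreyConst_mul_rpow (hp : 1 < p) :
    1 ≤ hardyMorreyConst p * ((p - 1) / p) ^ (p - 1) := by
  have hp₁ : 0 < p - 1 := by linarith
  have hH : 0 < (p - 1) / p := div_pos hp₁ (by linarith)
  have hconst : hardyMorreyConst p * ((p - 1) / p) ^ (p - 1) = p / ((p - 1) / p) := by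
    rw [hardyMorreyConst, Real.rpow_sub_one hH.ne']
    field_simp
  rw [hconst, one_le_div hH]
  exact (div_le_one_of_le₀ (by linarith) (by linarith)).trans hp.le

lemma neg_deriv_hardyFlux_mul_le_hardyDensity_sub {X : ℝ} (hp : 1 < p) (ht : 0 < t)
    (hu : DifferentiableAt ℝ u t) (hX₀ : 0 ≤ X) (hX₁ : X ≤ 1) :
    -(deriv (hardyFlux p u) t * X + hardyFlux p u t * (X ^ 2 / t)) ≤
      hardyMorreyConst p *
        (hardyDensity p u t - ((p - 1) / p) ^ (p - 1) * deriv (hardyFlux p u) t) := by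
  have hH : 0 < (p - 1) / p := div_pos (by linarith) (by linarith)
  have hflux : hardyFlux p u t * (X ^ 2 / t) = |u t| ^ p / t ^ p * X ^ 2 := by
    rw [← hardyFlux_div_self ht]
    ring
  rw [hflux, (hasDerivAt_hardyFlux hp ht hu).deriv]
  set W := |u t| ^ p / t ^ p
  set r := hardySlope p u t
  calc -((p - 1) * W * (r - 1) * X + W * X ^ 2)
      = W * ((p - 1) * (1 - r) * X - X ^ 2) := by ring
    _ ≤ W * (p * bernoulliGap p r) := by
        gcongr
        exact mul_one_sub_mul_sub_sq_le_bernoulliGap hp.le r hX₀ hX₁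
    _ = hardyMorreyConst p * (((p - 1) / p) ^ p * W * bernoulliGap p r) := by
        have : ((p - 1) / p) ^ p ≠ 0 := (Real.rpow_pos_of_pos hH p).ne'
        unfold hardyMorreyConst
        field_simp
    _ ≤ _ := by
        gcongr
        · exact (hardyMorreyConst_pos hp).le
        · exact rpow_mul_bernoulliGap_le_hardyDensity_sub hp ht.le

end Flux

section Integration

variable {p a b : ℝ} {u : ℝ → ℝ}

lemma hardyFlux_le_integral (hp : 1 < p) (hb : 0 ≤ b) (hcont : ContinuousOn u (Icc 0 b))
    (hdiff : ∀ t ∈ Ioo 0 b, DifferentiableAt ℝ u t) (hzero : u 0 = 0)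
    (hint : IntegrableOn (fun t => |deriv u t| ^ p) (Icc 0 b)) :
    hardyFlux p u b ≤ ∫ t in 0..b, |deriv u t| ^ p := by
  have hp₀ : p ≠ 0 := by linarith
  rcases eq_or_ne (u b) 0 with hub | hub
  · rw [hardyFlux_of_eq_zero hp₀ hub]
    exact intervalIntegral.integral_nonneg hb fun t _ => by positivity
  have hb₀ : 0 < b := hb.lt_of_ne (by rintro rfl; exact hub hzero)
  set c := u b / b with hc
  -- Integrate the tangent line to `|·| ^ p` at the mean slope `c`, evaluated at `u'`.
  let g : ℝ → ℝ := fun t => |c| ^ p * (p * (u t / c) - (p - 1) * t)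
  have hg : g b - g 0 ≤ ∫ t in 0..b, |deriv u t| ^ p := by
    refine intervalIntegral.sub_le_integral_of_hasDeriv_right_of_le
      (g' := fun t => |c| ^ p * (p * (deriv u t / c) - (p - 1))) hb (by fun_prop)
      (fun t ht => ?_) hint fun t _ => ?_
    · have hline := (hasDerivAt_id t).const_mul (p - 1)
      have hu := (((hdiff t ht).hasDerivAt.div_const c).const_mul p).sub hline
      exact ((hu.const_mul (|c| ^ p)).congr_deriv (by rw [mul_one])).hasDerivWithinAt
    · have htangent := abs_rpow_mul_bernoulliGap_le hp₀ c (deriv u t)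
      have hgap := bernoulliGap_nonneg hp.le (deriv u t / c)
      exact sub_nonneg.1 (htangent.trans' (by positivity))
  calc hardyFlux p u b = |c| ^ p * b := by
        rw [hc, abs_div, abs_of_pos hb₀, Real.div_rpow (abs_nonneg _) hb,
          ← hardyFlux_div_self hb₀, div_mul_cancel₀ _ hb₀.ne']
    _ = g b - g 0 := by
        simp only [g, hzero, hc, div_div_cancel₀ hub]
        ring
    _ ≤ _ := hg

lemma continuousOn_hardyFlux (hp : 1 < p) (hcont : ContinuousOn u (Icc 0 b))
    (hdiff : ∀ t ∈ Ioo 0 b, DifferentiableAt ℝ u t) (hzero : u 0 = 0)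
    (hint : IntegrableOn (fun t => |deriv u t| ^ p) (Icc 0 b)) :
    ContinuousOn (hardyFlux p u) (Icc 0 b) := by
  intro t ht
  rcases ht.1.eq_or_lt with rfl | ht₀
  · have hprim : Filter.Tendsto (fun s => ∫ t in 0..s, |deriv u t| ^ p)
        (nhdsWithin 0 (Icc 0 b)) (nhds 0) := by
      rw [← uIcc_of_le ht.2] at hint ⊢
      simpa [ContinuousWithinAt] using
        intervalIntegral.continuousOn_primitive_interval hint 0 left_mem_uIcc
    rw [ContinuousWithinAt, hardyFlux_of_eq_zero (by linarith) hzero]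
    refine squeeze_zero' ?_ ?_ hprim
    · filter_upwards [self_mem_nhdsWithin] with s hs using hardyFlux_nonneg hs.1
    · filter_upwards [self_mem_nhdsWithin] with s hs
      exact hardyFlux_le_integral hp hs.1 (hcont.mono (Icc_subset_Icc_right hs.2))
        (fun t ht => hdiff t (Ioo_subset_Ioo_right hs.2 ht)) hzero
        (hint.mono_set (Icc_subset_Icc_right hs.2))
  · exact ((hcont t ht).abs.rpow_const (Or.inr (by linarith))).mul
      (Real.continuousAt_rpow_const t _ (Or.inl ht₀.ne')).continuousWithinAt

lemma rpow_mul_hardyFlux_sub_le_integral_hardyDensity (hp : 1 < p) (ha : 0 ≤ a) (hab : a ≤ b)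
    (hcont : ContinuousOn (hardyFlux p u) (Icc a b))
    (hdiff : ∀ t ∈ Ioo a b, DifferentiableAt ℝ u t)
    (hint : IntegrableOn (hardyDensity p u) (Icc a b)) :
    ((p - 1) / p) ^ (p - 1) * (hardyFlux p u b - hardyFlux p u a) ≤
      ∫ t in a..b, hardyDensity p u t := by
  rw [mul_sub]
  refine intervalIntegral.sub_le_integral_of_hasDeriv_right_of_le
    (g := fun t => ((p - 1) / p) ^ (p - 1) * hardyFlux p u t)
    (g' := fun t => ((p - 1) / p) ^ (p - 1) * deriv (hardyFlux p u) t) hab (hcont.const_mul _)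
    (fun t ht => ?_) hint fun t ht => ?_
  · have hflux := hasDerivAt_hardyFlux hp (ha.trans_lt ht.1) (hdiff t ht)
    exact (hflux.differentiableAt.hasDerivAt.const_mul _).hasDerivWithinAt
  · exact rpow_mul_deriv_hardyFlux_le_hardyDensity hp (ha.trans_lt ht.1) (hdiff t ht)

lemma weighted_hardyFlux_sub_le_integral_hardyDensity {D : ℝ} (hp : 1 < p) (ha : 0 < a)
    (hab : a ≤ b) (hbD : b ≤ D) (hcont : ContinuousOn (hardyFlux p u) (Icc a b))
    (hdiff : ∀ t ∈ Ioo a b, DifferentiableAt ℝ u t)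
    (hint : IntegrableOn (hardyDensity p u) (Icc a b)) :
    ((p - 1) / p) ^ (p - 1) * (hardyFlux p u b - hardyFlux p u a) +
        (hardyFlux p u a * logWeight (a / D) - hardyFlux p u b * logWeight (b / D)) /
          hardyMorreyConst p ≤
      ∫ t in a..b, hardyDensity p u t := by
  set X : ℝ → ℝ := fun t => logWeight (t / D)
  set G := hardyFlux p u
  set k := ((p - 1) / p) ^ (p - 1)
  have hX (t : ℝ) (hat : a ≤ t) (htb : t ≤ b) : HasDerivAt X (X t ^ 2 / t) t :=
    hasDerivAt_logWeight_div (ha.trans_le hat) (htb.trans hbD)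
  have hXcont : ContinuousOn X (Icc a b) := fun t ht =>
    (hX t ht.1 ht.2).continuousAt.continuousWithinAt
  let g : ℝ → ℝ := fun t => k * G t - G t * X t / hardyMorreyConst p
  have hg : g b - g a ≤ ∫ t in a..b, hardyDensity p u t := by
    refine intervalIntegral.sub_le_integral_of_hasDeriv_right_of_le
      (g' := fun t => k * deriv G t - (deriv G t * X t + G t * (X t ^ 2 / t)) / hardyMorreyConst p)
      hab (by fun_prop) (fun t ht => ?_) hint fun t ht => ?_
    all_goals have ht₀ : 0 < t := ha.trans ht.1
    · have hG := (hasDerivAt_hardyFlux hp ht₀ (hdiff t ht)).differentiableAt.hasDerivAt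
      exact ((hG.const_mul k).sub
        ((hG.mul (hX t ht.1.le ht.2.le)).div_const _)).hasDerivWithinAt
    · have htD : t ≤ D := ht.2.le.trans hbD
      have hquot₀ : 0 ≤ t / D := div_nonneg ht₀.le (ht₀.le.trans htD)
      have hquot₁ : t / D ≤ 1 := div_le_one_of_le₀ htD (ht₀.le.trans htD)
      have hbound := neg_deriv_hardyFlux_mul_le_hardyDensity_sub hp ht₀ (hdiff t ht)
        (logWeight_nonneg hquot₀ hquot₁) (logWeight_le_one hquot₀ hquot₁)
      rw [← div_le_iff₀' (hardyMorreyConst_pos hp), neg_div] at hbound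
      linarith
  refine le_trans (le_of_eq ?_) hg
  simp only [g]
  ring

lemma integrableOn_abs_rpow_div_rpow_of_pos (hp : 0 ≤ p) (ha : 0 < a)
    (hcont : ContinuousOn u (Icc a b)) :
    IntegrableOn (fun t => |u t| ^ p / t ^ p) (Icc a b) := by
  refine ContinuousOn.integrableOn_Icc (ContinuousOn.div ?_ ?_ fun t ht => ?_)
  · exact hcont.abs.rpow_const fun t _ => Or.inr hp
  · exact (Real.continuous_rpow_const hp).continuousOn
  · exact (Real.rpow_pos_of_pos (ha.trans_le ht.1) p).ne'

lemma rpow_mul_integral_abs_rpow_div_rpow_le (hp : 1 < p) (ha : 0 < a) (hab : a ≤ b)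
    (hcont : ContinuousOn u (Icc 0 b)) (hdiff : ∀ t ∈ Ioo 0 b, DifferentiableAt ℝ u t)
    (hzero : u 0 = 0) (hint : IntegrableOn (fun t => |deriv u t| ^ p) (Icc 0 b)) :
    ((p - 1) / p) ^ p * ∫ t in a..b, |u t| ^ p / t ^ p ≤ ∫ t in 0..b, |deriv u t| ^ p := by
  have hH : 0 ≤ (p - 1) / p := div_nonneg (by linarith) (by linarith)
  have hleft : Icc 0 a ⊆ Icc 0 b := Icc_subset_Icc_right hab
  have hright : Icc a b ⊆ Icc 0 b := Icc_subset_Icc_left ha.le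
  have hint₀ : IntervalIntegrable (fun t => |deriv u t| ^ p) volume 0 a :=
    (intervalIntegrable_iff_integrableOn_Icc_of_le ha.le).2 (hint.mono_set hleft)
  have hint₁ : IntervalIntegrable (fun t => |deriv u t| ^ p) volume a b :=
    (intervalIntegrable_iff_integrableOn_Icc_of_le hab).2 (hint.mono_set hright)
  have hW : IntegrableOn (fun t => ((p - 1) / p) ^ p * (|u t| ^ p / t ^ p)) (Icc a b) :=
    (integrableOn_abs_rpow_div_rpow_of_pos (by linarith) ha (hcont.mono hright)).const_mul _
  have hdensity := rpow_mul_hardyFlux_sub_le_integral_hardyDensity hp ha.le hab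
    ((continuousOn_hardyFlux hp hcont hdiff hzero hint).mono hright)
    (fun t ht => hdiff t (Ioo_subset_Ioo_left ha.le ht)) ((hint.mono_set hright).sub hW)
  have hflux : ((p - 1) / p) ^ (p - 1) * hardyFlux p u a ≤ ∫ t in 0..a, |deriv u t| ^ p :=
    (mul_le_of_le_one_left (hardyFlux_nonneg ha.le) (Real.rpow_le_one hH
      (div_le_one_of_le₀ (by linarith) (by linarith)) (by linarith))).trans
      (hardyFlux_le_integral hp ha.le (hcont.mono hleft)
        (fun t ht => hdiff t (Ioo_subset_Ioo_right hab ht)) hzero (hint.mono_set hleft))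
  have hflux_nonneg : 0 ≤ ((p - 1) / p) ^ (p - 1) * hardyFlux p u b :=
    mul_nonneg (Real.rpow_nonneg hH _) (hardyFlux_nonneg (ha.le.trans hab))
  simp only [hardyDensity] at hdensity
  rw [intervalIntegral.integral_sub hint₁
    ((intervalIntegrable_iff_integrableOn_Icc_of_le hab).2 hW),
    intervalIntegral.integral_const_mul] at hdensity
  rw [← intervalIntegral.integral_add_adjacent_intervals hint₀ hint₁]
  linarith

lemma integrableOn_abs_rpow_div_rpow (hp : 1 < p) (hb : 0 < b) (hcont : ContinuousOn u (Icc 0 b))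
    (hdiff : ∀ t ∈ Ioo 0 b, DifferentiableAt ℝ u t) (hzero : u 0 = 0)
    (hint : IntegrableOn (fun t => |deriv u t| ^ p) (Icc 0 b)) :
    IntegrableOn (fun t => |u t| ^ p / t ^ p) (Icc 0 b) := by
  have hH : 0 < ((p - 1) / p) ^ p :=
    Real.rpow_pos_of_pos (div_pos (by linarith) (by linarith)) p
  obtain ⟨a, -, ha, ha_tendsto⟩ := exists_seq_strictAnti_tendsto' hb
  rw [integrableOn_Icc_iff_integrableOn_Ioc]
  refine integrableOn_Ioc_of_intervalIntegral_norm_bounded_left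
    (I := (∫ t in 0..b, |deriv u t| ^ p) / ((p - 1) / p) ^ p) (fun n => ?_) ha_tendsto
    (.of_forall fun n => ?_)
  · exact (integrableOn_abs_rpow_div_rpow_of_pos (by linarith) (ha n).1
      (hcont.mono (Icc_subset_Icc_left (ha n).1.le))).mono_set Ioc_subset_Icc_self
  · have hnorm (t : ℝ) (ht : t ∈ Ioc (a n) b) :
        ‖|u t| ^ p / t ^ p‖ = |u t| ^ p / t ^ p := by
      have : 0 < t := (ha n).1.trans ht.1
      exact Real.norm_of_nonneg (by positivity)
    rw [setIntegral_congr_fun measurableSet_Ioc hnorm,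
      ← intervalIntegral.integral_of_le (ha n).2.le, le_div_iff₀' hH]
    exact rpow_mul_integral_abs_rpow_div_rpow_le hp (ha n).1 (ha n).2.le hcont hdiff hzero hint

lemma integrableOn_hardyDensity (hp : 1 < p) (hb : 0 < b) (hcont : ContinuousOn u (Icc 0 b))
    (hdiff : ∀ t ∈ Ioo 0 b, DifferentiableAt ℝ u t) (hzero : u 0 = 0)
    (hint : IntegrableOn (fun t => |deriv u t| ^ p) (Icc 0 b)) :
    IntegrableOn (hardyDensity p u) (Icc 0 b) :=
  hint.sub ((integrableOn_abs_rpow_div_rpow hp hb hcont hdiff hzero hint).const_mul _)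

lemma integral_hardyDensity (hp : 1 < p) (hb : 0 < b) (hcont : ContinuousOn u (Icc 0 b))
    (hdiff : ∀ t ∈ Ioo 0 b, DifferentiableAt ℝ u t) (hzero : u 0 = 0)
    (hint : IntegrableOn (fun t => |deriv u t| ^ p) (Icc 0 b)) :
    ∫ t in 0..b, hardyDensity p u t =
      (∫ t in Ioo 0 b, |deriv u t| ^ p) -
        ((p - 1) / p) ^ p * ∫ t in Ioo 0 b, |u t| ^ p / t ^ p := by
  have hW := integrableOn_abs_rpow_div_rpow hp hb hcont hdiff hzero hint
  rw [intervalIntegral.integral_of_le hb.le, integral_Ioc_eq_integral_Ioo, ← integral_const_mul]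
  exact integral_sub (hint.mono_set Ioo_subset_Icc_self)
    ((hW.mono_set Ioo_subset_Icc_self).const_mul _)

lemma hardyFlux_mul_logWeight_le {D x : ℝ} (hp : 1 < p) (hcont : ContinuousOn u (Icc 0 b))
    (hdiff : ∀ t ∈ Ioo 0 b, DifferentiableAt ℝ u t) (hzero : u 0 = 0)
    (hint : IntegrableOn (fun t => |deriv u t| ^ p) (Icc 0 b)) (hbD : b ≤ D)
    (hx : x ∈ Ioc 0 b) :
    hardyFlux p u x * logWeight (x / D) ≤
      hardyMorreyConst p * ∫ t in 0..b, hardyDensity p u t := by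
  have hb : 0 < b := hx.1.trans_le hx.2
  have hD : 0 < D := hb.trans_le hbD
  have hA := hardyMorreyConst_pos hp
  have hleft : Icc 0 x ⊆ Icc 0 b := Icc_subset_Icc_right hx.2
  have hright : Icc x b ⊆ Icc 0 b := Icc_subset_Icc_left hx.1.le
  have hG := continuousOn_hardyFlux hp hcont hdiff hzero hint
  have hE := integrableOn_hardyDensity hp hb hcont hdiff hzero hint
  have hnear := rpow_mul_hardyFlux_sub_le_integral_hardyDensity hp le_rfl hx.1.le (hG.mono hleft)
    (fun t ht => hdiff t (Ioo_subset_Ioo_right hx.2 ht)) (hE.mono_set hleft)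
  have hfar := weighted_hardyFlux_sub_le_integral_hardyDensity hp hx.1 hx.2 hbD (hG.mono hright)
    (fun t ht => hdiff t (Ioo_subset_Ioo_left hx.1.le ht)) (hE.mono_set hright)
  rw [hardyFlux_of_eq_zero (by linarith) hzero, sub_zero] at hnear
  rw [← intervalIntegral.integral_add_adjacent_intervals
    ((intervalIntegrable_iff_integrableOn_Icc_of_le hx.1.le).2 (hE.mono_set hleft))
    ((intervalIntegrable_iff_integrableOn_Icc_of_le hx.2).2 (hE.mono_set hright))]
  have hboundary : hardyFlux p u b * logWeight (b / D) ≤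
      hardyMorreyConst p * ((p - 1) / p) ^ (p - 1) * hardyFlux p u b := by
    rw [mul_comm]
    gcongr
    · exact hardyFlux_nonneg hb.le
    · exact (logWeight_le_one (by positivity) (div_le_one_of_le₀ hbD hD.le)).trans
        (one_le_hardyMorreyConst_mul_rpow hp)
  have hsum := mul_le_mul_of_nonneg_left (add_le_add hnear hfar) hA.le
  refine le_trans ?_ hsum
  rw [mul_add, mul_add, mul_div_cancel₀ _ hA.ne']
  linarith

lemma integrableOn_abs_deriv_rpow (hp : 0 ≤ p) (hu : ContDiff ℝ 1 u) :
    IntegrableOn (fun t => |deriv u t| ^ p) (Icc a b) :=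
  ((hu.continuous_deriv le_rfl).abs.rpow_const fun _ => Or.inr hp).continuousOn.integrableOn_Icc

end Integration

theorem hardy_morrey_pointwise_dim_one_general (p : ℝ) (hp : 1 < p) :
    ∃ c : ℝ, 0 < c ∧
      ∀ (b : ℝ) (u : ℝ → ℝ), ContinuousOn u (Icc 0 b) → DifferentiableOn ℝ u (Ioo 0 b) →
        u 0 = 0 → IntegrableOn (fun t => |deriv u t| ^ p) (Ioo 0 b) →
        ∀ D : ℝ, b ≤ D → ∀ x ∈ Ioc 0 b,
          |u x| * x ^ (1 / p - 1) * ((1 - Real.log (x / D))⁻¹) ^ (1 / p) ≤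
            c * ((∫ t in Ioo 0 b, |deriv u t| ^ p)
              - ((p - 1) / p) ^ p * ∫ t in Ioo 0 b, |u t| ^ p / t ^ p) ^ (1 / p) := by
  have hA := hardyMorreyConst_pos hp
  refine ⟨hardyMorreyConst p ^ (1 / p), by positivity,
    fun b u hcont hdiffOn hzero hint D hbD x hx => ?_⟩
  have hb : 0 < b := hx.1.trans_le hx.2
  have hdiff (t : ℝ) (ht : t ∈ Ioo 0 b) : DifferentiableAt ℝ u t :=
    hdiffOn.differentiableAt (isOpen_Ioo.mem_nhds ht)
  rw [← integrableOn_Icc_iff_integrableOn_Ioo] at hint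
  rw [← integral_hardyDensity hp hb hcont hdiff hzero hint, ← logWeight,
    abs_mul_rpow_eq_hardyFlux_rpow (by linarith) hx.1.le]
  have hbound := hardyFlux_mul_logWeight_le hp hcont hdiff hzero hint hbD hx
  have hG : 0 ≤ hardyFlux p u x := hardyFlux_nonneg hx.1.le
  have hX : 0 ≤ logWeight (x / D) :=
    logWeight_nonneg (div_nonneg hx.1.le (hb.le.trans hbD))
      (div_le_one_of_le₀ (hx.2.trans hbD) (hb.le.trans hbD))
  have hE : 0 ≤ ∫ t in 0..b, hardyDensity p u t :=
    nonneg_of_mul_nonneg_right ((mul_nonneg hG hX).trans hbound) hA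
  rw [← Real.mul_rpow hG hX, ← Real.mul_rpow hA.le hE]
  exact Real.rpow_le_rpow (mul_nonneg hG hX) hbound (by positivity)

/-- one-dimensional pointwise Hardy–Morrey estimate at the origin. -/
theorem hardy_morrey_pointwise_dim_one (p : ℝ) (hp : 1 < p) :
    ∃ c : ℝ, 0 < c ∧
      ∀ u : ℝ → ℝ, ContDiff ℝ (⊤ : ℕ∞) u → HasCompactSupport u →
        tsupport u ⊆ Set.Ioo (0 : ℝ) 1 →
        ∀ D : ℝ, 1 ≤ D → ∀ x ∈ Set.Ioo (0 : ℝ) 1,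
          |u x| * x ^ (1 / p - 1) * ((1 - Real.log (x / D))⁻¹) ^ (1 / p) ≤
            c * ((∫ t in Set.Ioo (0 : ℝ) 1, |deriv u t| ^ p)
              - ((p - 1) / p) ^ p * ∫ t in Set.Ioo (0 : ℝ) 1, |u t| ^ p / t ^ p) ^ (1 / p) := by
  obtain ⟨c, hc, hbound⟩ := hardy_morrey_pointwise_dim_one_general p hp
  exact ⟨c, hc, fun u hu _ hsupp D hD x hx => hbound 1 u hu.continuous.continuousOn
    (hu.differentiable (by simp)).differentiableOn
    (image_eq_zero_of_notMem_tsupport fun h => lt_irrefl 0 (hsupp h).1)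
    ((integrableOn_abs_deriv_rpow (by linarith) (hu.of_le (by simp))).mono_set Ioo_subset_Icc_self)
    D hD x (Ioo_subset_Ioc_self hx)⟩
end

section
/- Let n ≥ 1 and p > n. There exists a constant C = C(n,p) > 0 such that the following holds. Let Ω ⊊ ℝⁿ be a domain with finite Lebesgue measure Lⁿ(Ω), let d(x) := dist(x, ℝⁿ∖Ω), and assume that −Δd ≥ 0 in the sense of distributions on Ω, i.e. ∫_Ω d(x) Δφ(x) dx ≤ 0 for every nonnegative φ ∈ C_c^∞(Ω). Then for every u ∈ C_c^∞(Ω), sup_{x ∈ Ω} |u(x)| ≤ C · (Lⁿ(Ω))^{1/n − 1/p} · ( ∫_Ω |∇u|^p dx − ((p−1)/p)^p ∫_Ω |u|^p / d^p dx )^{1/p}. -/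
open MeasureTheory Metric Set

/-- The (pointwise) Laplacian of a function on Euclidean space,
as the sum of its repeated directional derivatives along the coordinate directions. -/
noncomputable def lapl {n : ℕ} (φ : EuclideanSpace ℝ (Fin n) → ℝ)
    (x : EuclideanSpace ℝ (Fin n)) : ℝ :=
  ∑ i : Fin n,
    fderiv ℝ (fun y => fderiv ℝ φ y (EuclideanSpace.single i (1 : ℝ))) x
      (EuclideanSpace.single i (1 : ℝ))

/-!
Fix `n < q < p` and write `I(u)` for the Hardy difference. Testing the superharmonicity of `d` with
`d * g (H * u / d)₊`, where `H = (p - 1) / p` and `g s = |s| ^ p - |s| ^ q / q`, and using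
`|∇d| = 1` almost everywhere, reduces a remainder estimate
`c * ∫ |∇u| ^ q ≤ I(u) + A * |Ω|` to a pointwise strengthening of Young's inequality: the lower
order term of `g` leaves room for `c * |∇u| ^ q`. Since `I` is homogeneous of degree `p` and the
left-hand side of degree `q`, replacing `u` by `l * u` and optimising in `l` gives
`∫ |∇u| ^ q ≤ C * |Ω| ^ (1 - q / p) * I(u) ^ (q / p)`. As `q > n`, bounding `u` by the Riesz
potential of `|∇u|` and applying Hölder's inequality converts this into a bound on `sup |u|`.
-/

open Filter Topology
open scoped NNReal Gradient RealInnerProductSpace ContDiff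

theorem one_sub_rpow_le_inv {y e : ℝ} (hy₀ : 0 ≤ y) (hy₁ : y < 1) (he : 1 ≤ e) :
    (1 - y) ^ e ≤ (1 + e * y)⁻¹ := by
  have h1y : 0 < 1 - y := sub_pos.2 hy₁
  have hinv : 1 + y ≤ (1 - y)⁻¹ := by
    rw [le_inv_comm₀ (by positivity) h1y, ← one_div, le_div_iff₀ (by positivity)]
    nlinarith
  rw [le_inv_comm₀ (by positivity) (by positivity), ← Real.inv_rpow h1y.le]
  exact (one_add_mul_self_le_rpow_one_add (by linarith) he).trans
    (Real.rpow_le_rpow (by positivity) hinv (by linarith))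

theorem mul_one_sub_mul_add_le_rpow_add {p s y r : ℝ} (hp : 1 < p) (hs : 0 ≤ s) (hy₀ : 0 ≤ y)
    (hy₁ : y < 1) (hr : 0 ≤ r) :
    p * s ^ (p - 1) * (1 - y) * r + (1 + p / (p - 1) * y)⁻¹ * (p * y * s ^ p) ≤
      r ^ p + (p - 1) * s ^ p := by
  have hp1 : 0 < p - 1 := sub_pos.2 hp
  have hpow : (s ^ (p - 1) * (1 - y)) ^ (p / (p - 1)) ≤ s ^ p * (1 + p / (p - 1) * y)⁻¹ := by
    rw [Real.mul_rpow (by positivity) (by linarith), ← Real.rpow_mul hs,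
      mul_div_cancel₀ _ hp1.ne']
    gcongr
    exact one_sub_rpow_le_inv hy₀ hy₁ ((one_le_div hp1).2 (by linarith))
  have : 0 < 1 + p / (p - 1) * y := by positivity
  calc p * s ^ (p - 1) * (1 - y) * r + (1 + p / (p - 1) * y)⁻¹ * (p * y * s ^ p)
      = p * (s ^ (p - 1) * (1 - y) * r) + (1 + p / (p - 1) * y)⁻¹ * (p * y * s ^ p) := by ring
    _ ≤ p * ((s ^ (p - 1) * (1 - y)) ^ (p / (p - 1)) / (p / (p - 1)) + r ^ p / p)
        + (1 + p / (p - 1) * y)⁻¹ * (p * y * s ^ p) := by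
        gcongr
        exact Real.young_inequality_of_nonneg (mul_nonneg (by positivity) (sub_nonneg.2 hy₁.le)) hr
          (Real.HolderConjugate.conjExponent hp).symm
    _ ≤ p * (s ^ p * (1 + p / (p - 1) * y)⁻¹ / (p / (p - 1)) + r ^ p / p)
        + (1 + p / (p - 1) * y)⁻¹ * (p * y * s ^ p) := by gcongr
    _ = r ^ p + (p - 1) * s ^ p := by field_simp; ring

theorem eventually_hardy_young {p q θ : ℝ} (hq : 1 < q) (hqp : q < p) (hθ : θ < 1) :
    ∀ᶠ s : ℝ in atTop, ∀ r : ℝ, 0 ≤ r →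
      (p * s ^ (p - 1) - s ^ (q - 1)) * r + θ * s ^ q ≤ r ^ p + (p - 1) * s ^ p := by
  have hp : 1 < p := hq.trans hqp
  have hy_lim : Tendsto (fun s : ℝ => s ^ (-(p - q)) / p) atTop (𝓝 0) := by
    simpa using (tendsto_rpow_neg_atTop (sub_pos.2 hqp)).div_const p
  have hθ_lim : Tendsto (fun s : ℝ => (1 + p / (p - 1) * (s ^ (-(p - q)) / p))⁻¹) atTop (𝓝 1) := by
    simpa using ((hy_lim.const_mul (p / (p - 1))).const_add 1).inv₀ (by simp)
  filter_upwards [hy_lim.eventually_lt_const one_pos, hθ_lim.eventually_const_lt hθ,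
    eventually_gt_atTop 0] with s hy₁ hθs hs r hr
  set y : ℝ := s ^ (-(p - q)) / p with hy
  have hcoef : p * s ^ (p - 1) - s ^ (q - 1) = p * s ^ (p - 1) * (1 - y) := by
    have : s ^ (q - 1) = s ^ (p - 1) * s ^ (-(p - q)) := by rw [← Real.rpow_add hs]; ring_nf
    rw [this, hy]; field_simp
  have hsq : s ^ q = p * y * s ^ p := by
    have : s ^ q = s ^ p * s ^ (-(p - q)) := by rw [← Real.rpow_add hs]; ring_nf
    rw [this, hy]; field_simp
  calc (p * s ^ (p - 1) - s ^ (q - 1)) * r + θ * s ^ q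
      ≤ p * s ^ (p - 1) * (1 - y) * r + (1 + p / (p - 1) * y)⁻¹ * (p * y * s ^ p) := by
        rw [hcoef, ← hsq]; gcongr
    _ ≤ r ^ p + (p - 1) * s ^ p :=
        mul_one_sub_mul_add_le_rpow_add hp hs.le (by positivity) hy₁ hr

theorem rpow_add_hardy_young_of_mul_le {p q θ s r : ℝ} (hq : 1 < q) (hqp : q < p) (hθ : θ ≤ 1)
    (hs : 1 ≤ s) (hs_large : (p - 1)⁻¹ ≤ s ^ (p - q)) (hsr : (2 * p) ^ (p - 1)⁻¹ * s ≤ r) :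
    1 / 2 * r ^ q + (p * s ^ (p - 1) - s ^ (q - 1)) * r + θ * s ^ q ≤ r ^ p + (p - 1) * s ^ p := by
  have hp : 1 < p := hq.trans hqp
  set M : ℝ := (2 * p) ^ (p - 1)⁻¹
  have hM : M ^ (p - 1) = 2 * p := Real.rpow_inv_rpow (by positivity) (sub_pos.2 hp).ne'
  have hM1 : 1 ≤ M := Real.one_le_rpow (by linarith) (inv_nonneg.2 (sub_pos.2 hp).le)
  have hr1 : 1 ≤ r := by nlinarith
  have hlin : p * s ^ (p - 1) * r ≤ r ^ p / 2 := by
    have hrp : r ^ p = r ^ (p - 1) * r := by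
      rw [← Real.rpow_add_one (by positivity), sub_add_cancel]
    have : 2 * p * s ^ (p - 1) ≤ r ^ (p - 1) := by
      rw [← hM, ← Real.mul_rpow (by positivity) (by positivity)]
      gcongr
    rw [hrp]
    nlinarith
  have hrq : r ^ q ≤ r ^ p := by gcongr
  have hsp : θ * s ^ q ≤ (p - 1) * s ^ p := by
    have hspq : s ^ p = s ^ (p - q) * s ^ q := by
      rw [← Real.rpow_add (by linarith), sub_add_cancel]
    have : 1 ≤ (p - 1) * s ^ (p - q) := (inv_le_iff_one_le_mul₀' (sub_pos.2 hp)).1 hs_large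
    rw [hspq, ← mul_assoc]
    gcongr
    linarith
  have : 0 ≤ s ^ (q - 1) * r := by positivity
  linarith

theorem eventually_rpow_add_hardy_young {p q θ : ℝ} (hq : 1 < q) (hqp : q < p) (hθ : θ < 1) :
    ∃ c > 0, c ≤ 1 ∧ ∀ᶠ s : ℝ in atTop, ∀ r : ℝ, 0 ≤ r →
      c * r ^ q + |p * s ^ (p - 1) - s ^ (q - 1)| * r + θ * s ^ q ≤ r ^ p + (p - 1) * s ^ p := by
  have hp : 1 < p := hq.trans hqp
  obtain ⟨θ', hθθ', hθ'⟩ := exists_between hθ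
  set M : ℝ := (2 * p) ^ (p - 1)⁻¹
  have hMq : 0 < M ^ q := by positivity
  have hlarge : ∀ᶠ s : ℝ in atTop, (p - 1)⁻¹ ≤ s ^ (p - q) :=
    (tendsto_rpow_atTop (sub_pos.2 hqp)).eventually_ge_atTop _
  set c : ℝ := min (1 / 2) ((θ' - θ) / M ^ q)
  have hc2 : c ≤ 1 / 2 := min_le_left _ _
  have hc0 : 0 < c := lt_min (by norm_num) (div_pos (sub_pos.2 hθθ') hMq)
  have hcM : c * M ^ q ≤ θ' - θ := (le_div_iff₀ hMq).1 (min_le_right _ _)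
  refine ⟨c, hc0, hc2.trans (by norm_num), ?_⟩
  filter_upwards [eventually_hardy_young hq hqp hθ', hlarge, eventually_ge_atTop 1]
    with s hyoung hs_large hs r hr
  have hcoef : 0 ≤ p * s ^ (p - 1) - s ^ (q - 1) := by
    have : s ^ (q - 1) ≤ s ^ (p - 1) := by gcongr
    nlinarith [Real.rpow_nonneg (zero_le_one.trans hs) (p - 1)]
  rw [abs_of_nonneg hcoef]
  rcases le_total r (M * s) with hrs | hrs
  · have : c * r ^ q ≤ (θ' - θ) * s ^ q := by
      calc c * r ^ q ≤ c * (M * s) ^ q := by gcongr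
        _ = c * M ^ q * s ^ q := by rw [Real.mul_rpow (by positivity) (by positivity), mul_assoc]
        _ ≤ (θ' - θ) * s ^ q := by gcongr
    linarith [hyoung r hr]
  · have : c * r ^ q ≤ 1 / 2 * r ^ q := by gcongr
    linarith [rpow_add_hardy_young_of_mul_le hq hqp hθ.le hs hs_large hrs]

theorem exists_const_mul_rpow_le_rpow_add {a p q : ℝ} (ha : 0 ≤ a) (hq : 0 ≤ q) (hqp : q < p) :
    ∃ K ≥ 0, ∀ r ≥ 0, a * r ^ q ≤ r ^ p + K := by
  set R : ℝ := a ^ (p - q)⁻¹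
  have hR : R ^ (p - q) = a := Real.rpow_inv_rpow ha (sub_pos.2 hqp).ne'
  refine ⟨a * R ^ q, by positivity, fun r hr => ?_⟩
  rcases le_total r R with hrR | hRr
  · have : a * r ^ q ≤ a * R ^ q := by gcongr
    linarith [Real.rpow_nonneg hr p]
  · calc a * r ^ q ≤ r ^ (p - q) * r ^ q := by rw [← hR]; gcongr
      _ = r ^ p := by rw [← Real.rpow_add_of_nonneg hr (sub_pos.2 hqp).le hq, sub_add_cancel]
      _ ≤ r ^ p + a * R ^ q := le_add_of_nonneg_right (by positivity)

theorem exists_rpow_add_hardy_young {p q θ : ℝ} (hq : 1 < q) (hqp : q < p) (hθ : θ < 1) :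
    ∃ c > 0, c ≤ 1 ∧ ∃ K ≥ 0, ∀ s ≥ 0, ∀ r ≥ 0,
      c * r ^ q + |p * s ^ (p - 1) - s ^ (q - 1)| * r + θ * s ^ q ≤
        r ^ p + (p - 1) * s ^ p + K := by
  have hp : 1 < p := hq.trans hqp
  obtain ⟨c, hc, hc1, hlarge⟩ := eventually_rpow_add_hardy_young hq hqp hθ
  obtain ⟨S, hS⟩ := eventually_atTop.1 (hlarge.and (eventually_ge_atTop 0))
  have hS0 : 0 ≤ S := (hS S le_rfl).2
  set L : ℝ := p * S ^ (p - 1) + S ^ (q - 1)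
  obtain ⟨K₁, hK₁, hrq⟩ :=
    exists_const_mul_rpow_le_rpow_add (a := 2 * c) (by positivity) (by linarith) hqp
  obtain ⟨K₂, hK₂, hr1⟩ :=
    exists_const_mul_rpow_le_rpow_add (a := 2 * L) (by positivity) zero_le_one hp
  refine ⟨c, hc, hc1, K₁ + K₂ + S ^ q, by positivity, fun s hs r hr => ?_⟩
  rcases le_total S s with hSs | hsS
  · linarith [(hS s hSs).1 r hr, Real.rpow_nonneg hS0 q]
  · have hcoef : |p * s ^ (p - 1) - s ^ (q - 1)| ≤ L := by
      have hsp : s ^ (p - 1) ≤ S ^ (p - 1) := by gcongr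
      have hsq : s ^ (q - 1) ≤ S ^ (q - 1) := by gcongr
      rw [abs_le]
      constructor <;> nlinarith [Real.rpow_nonneg hs (p - 1), Real.rpow_nonneg hs (q - 1)]
    have hθs : θ * s ^ q ≤ S ^ q := by
      calc θ * s ^ q ≤ 1 * s ^ q := by gcongr
        _ ≤ S ^ q := by rw [one_mul]; gcongr
    have hLr : 2 * L * r ≤ r ^ p + K₂ := by simpa using hr1 r hr
    have hsp : 0 ≤ (p - 1) * s ^ p := mul_nonneg (sub_pos.2 hp).le (Real.rpow_nonneg hs p)
    linarith [hrq r hr, mul_le_mul_of_nonneg_right hcoef hr]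

/-- The profile `g` of the test function `d * g (H * u / d)₊`, `H = (p - 1) / p`, for the
superharmonicity of `d`. The leading power gives the sharp Hardy weight, and the subtracted power
produces the remainder that controls `‖∇u‖ ^ q`. -/
noncomputable def hardyProfile (p q s : ℝ) : ℝ := |s| ^ p - |s| ^ q / q

theorem hardyProfile_zero {p q : ℝ} (hp : p ≠ 0) (hq : q ≠ 0) : hardyProfile p q 0 = 0 := by
  simp [hardyProfile, hp, hq]

theorem hasDerivAt_hardyProfile {p q : ℝ} (hp : 1 < p) (hq : 1 < q) (s : ℝ) :
    HasDerivAt (hardyProfile p q) (p * |s| ^ (p - 2) * s - |s| ^ (q - 2) * s) s :=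
  ((hasDerivAt_abs_rpow s hp).sub ((hasDerivAt_abs_rpow s hq).div_const q)).congr_deriv
    (by field_simp)

theorem contDiff_hardyProfile {p q : ℝ} (hp : 1 < p) (hq : 1 < q) :
    ContDiff ℝ 1 (hardyProfile p q) :=
  (contDiff_norm_rpow hp).sub ((contDiff_norm_rpow hq).div_const q)

theorem abs_rpow_sub_two_mul_self (s : ℝ) {p : ℝ} (hp : p ≠ 1) :
    |s| ^ (p - 2) * |s| = |s| ^ (p - 1) := by
  rw [← Real.rpow_add_one' (abs_nonneg s) (by contrapose! hp; linarith)]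
  ring_nf

theorem abs_deriv_hardyProfile {p q : ℝ} (hp : 1 < p) (hq : 1 < q) (s : ℝ) :
    |deriv (hardyProfile p q) s| = |p * |s| ^ (p - 1) - |s| ^ (q - 1)| := by
  rw [(hasDerivAt_hardyProfile hp hq s).deriv, ← sub_mul, abs_mul, ← abs_abs s, ← abs_mul,
    sub_mul, abs_abs, mul_assoc, abs_rpow_sub_two_mul_self s hp.ne',
    abs_rpow_sub_two_mul_self s hq.ne']

theorem hardyProfile_sub_mul_deriv {p q : ℝ} (hp : 1 < p) (hq : 1 < q) (s : ℝ) :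
    hardyProfile p q s - s * deriv (hardyProfile p q) s =
      -((p - 1) * |s| ^ p - (q - 1) / q * |s| ^ q) := by
  have habs {e : ℝ} (he : 1 < e) : |s| ^ (e - 2) * s * s = |s| ^ e := by
    rw [mul_assoc, ← abs_mul_abs_self, ← sq, ← Real.rpow_natCast,
      ← Real.rpow_add' (abs_nonneg s) (by norm_num; linarith)]
    norm_num
  rw [(hasDerivAt_hardyProfile hp hq s).deriv, hardyProfile, ← habs hp, ← habs hq]
  field_simp
  ring

theorem abs_le_one_of_hardyProfile_nonpos {p q s : ℝ} (hq : 1 ≤ q) (hqp : q < p)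
    (hs : hardyProfile p q s ≤ 0) : |s| ≤ 1 := by
  by_contra! hs1
  have hpq : |s| ^ q < |s| ^ p := Real.rpow_lt_rpow_of_exponent_lt hs1 hqp
  have hqq : |s| ^ q / q ≤ |s| ^ q := div_le_self (by positivity) hq
  exact hs.not_gt (sub_pos.2 (hqq.trans_lt hpq))

theorem exists_hardyProfile_le {p q : ℝ} (hq : 1 < q) (hqp : q < p) :
    ∃ c > 0, ∃ K ≥ 0, ∀ s a r : ℝ, |a| ≤ r →
      c * r ^ q + (if 0 < hardyProfile p q s then
        deriv (hardyProfile p q) s * a +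
          p / (p - 1) * (hardyProfile p q s - s * deriv (hardyProfile p q) s) else 0) ≤
        r ^ p - |s| ^ p + K := by
  have hp : 1 < p := hq.trans hqp
  have hp1 : 0 < p - 1 := sub_pos.2 hp
  obtain ⟨c, hc, hc1, K, hK, hcK⟩ :=
    exists_rpow_add_hardy_young (θ := p * (q - 1) / ((p - 1) * q)) hq hqp
      ((div_lt_one (by positivity)).2 (by linarith))
  refine ⟨c, hc, K + 2, by positivity, fun s a r har => ?_⟩
  have hr : 0 ≤ r := (abs_nonneg a).trans har
  split_ifs with hs
  · have ha : deriv (hardyProfile p q) s * a ≤ |p * |s| ^ (p - 1) - |s| ^ (q - 1)| * r := by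
      rw [← abs_deriv_hardyProfile hp hq]
      exact (le_abs_self _).trans
        ((abs_mul _ _).trans_le (mul_le_mul_of_nonneg_left har (abs_nonneg _)))
    have hrem : p / (p - 1) * (hardyProfile p q s - s * deriv (hardyProfile p q) s) =
        p * (q - 1) / ((p - 1) * q) * |s| ^ q - p * |s| ^ p := by
      rw [hardyProfile_sub_mul_deriv hp hq]
      field_simp
      ring
    linarith [hcK |s| (abs_nonneg s) r hr]
  · have hs1 : |s| ≤ 1 := abs_le_one_of_hardyProfile_nonpos hq.le hqp (not_lt.1 hs)
    have hsp : |s| ^ p ≤ 1 := Real.rpow_le_one (abs_nonneg s) hs1 (by linarith)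
    have hrq : r ^ q ≤ 1 + r ^ p := by
      rcases le_total r 1 with hr1 | hr1
      · linarith [Real.rpow_le_one hr hr1 (by linarith : 0 ≤ q), Real.rpow_nonneg hr p]
      · have : r ^ q ≤ r ^ p := by gcongr
        linarith
    nlinarith [Real.rpow_nonneg hr q]

theorem exists_lipschitzWith_of_locallyLipschitz_of_hasCompactSupport {X F : Type*}
    [PseudoMetricSpace X] [ProperSpace X] [SeminormedAddCommGroup F] {f : X → F}
    (hf : LocallyLipschitz f) (hc : HasCompactSupport f) : ∃ K, LipschitzWith K f := by
  obtain ⟨K, hK⟩ := hf.locallyLipschitzOn.exists_lipschitzOnWith_of_compact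
    (hc.isCompact.cthickening (r := 1))
  obtain ⟨M, hM⟩ := hc.exists_bound_of_continuous hf.continuous
  have hbound : ∀ x ∈ tsupport f, ∀ y, dist (f x) (f y) ≤ max (K : ℝ) M * dist x y := by
    intro x hx y
    by_cases hy : y ∈ cthickening 1 (tsupport f)
    · exact (hK.dist_le_mul x (self_subset_cthickening _ hx) y hy).trans
        (by gcongr; exact le_max_left _ _)
    · have hxy : 1 ≤ dist x y := by
        by_contra! h
        exact hy (mem_cthickening_of_dist_le y x 1 _ hx (by rw [dist_comm]; exact h.le))
      have hfy : f y = 0 := image_eq_zero_of_notMem_tsupport fun h =>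
        hy (self_subset_cthickening _ h)
      calc dist (f x) (f y) = ‖f x‖ := by rw [hfy, dist_zero_right]
        _ ≤ max (K : ℝ) M * 1 := by rw [mul_one]; exact (hM x).trans (le_max_right _ _)
        _ ≤ max (K : ℝ) M * dist x y := by gcongr
  refine ⟨Real.toNNReal (max (K : ℝ) M), LipschitzWith.of_dist_le' fun x y => ?_⟩
  by_cases hx : x ∈ tsupport f
  · exact hbound x hx y
  by_cases hy : y ∈ tsupport f
  · rw [dist_comm, dist_comm x]; exact hbound y hy x
  · rw [image_eq_zero_of_notMem_tsupport hx, image_eq_zero_of_notMem_tsupport hy, dist_self]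
    exact mul_nonneg (le_max_of_le_left K.2) dist_nonneg

/-- The perspective `d * g (v / d)` of `g`, with value `0` where `d` vanishes. -/
noncomputable def perspective {X : Type*} (g : ℝ → ℝ) (d v : X → ℝ) (x : X) : ℝ :=
  d x * g (v x / d x)

theorem tsupport_perspective_subset {X : Type*} [TopologicalSpace X] {g : ℝ → ℝ} {d v : X → ℝ}
    (hg0 : g 0 = 0) : tsupport (perspective g d v) ⊆ tsupport v := by
  refine closure_mono fun x hx hvx => hx ?_
  simp [perspective, hvx, hg0]

section Perspective

variable {E : Type*} [NormedAddCommGroup E] [NormedSpace ℝ E] {g : ℝ → ℝ} {d v : E → ℝ}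

theorem hasFDerivAt_perspective {x : E} (hg : Differentiable ℝ g) (hv : DifferentiableAt ℝ v x)
    (hd : DifferentiableAt ℝ d x) (hdx : d x ≠ 0) :
    HasFDerivAt (perspective g d v)
      (deriv g (v x / d x) • fderiv ℝ v x +
        (g (v x / d x) - v x / d x * deriv g (v x / d x)) • fderiv ℝ d x) x := by
  have hinv : HasFDerivAt (fun y => (d y)⁻¹) _ x :=
    (hasDerivAt_inv hdx).comp_hasFDerivAt x hd.hasFDerivAt
  have hdiv : HasFDerivAt (fun y => v y * (d y)⁻¹) _ x := hv.hasFDerivAt.mul hinv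
  refine (hd.hasFDerivAt.mul ((hg _).hasDerivAt.comp_hasFDerivAt x hdiv)).congr_fderiv ?_
  ext z
  simp only [← div_eq_mul_inv, neg_smul, smul_neg, smul_add, Function.comp_apply, add_apply,
    neg_apply, smul_apply, smul_eq_mul]
  field_simp
  ring

theorem locallyLipschitz_perspective (hg : ContDiff ℝ 1 g) (hg0 : g 0 = 0) (hv : ContDiff ℝ 1 v)
    (hd : LocallyLipschitz d) (hdv : ∀ x ∈ tsupport v, d x ≠ 0) :
    LocallyLipschitz (perspective g d v) := by
  intro x
  by_cases hx : x ∈ tsupport v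
  · have hC1 : ContDiffAt ℝ 1 (fun y : ℝ × ℝ => y.1 * g (y.2 / y.1)) (d x, v x) :=
      contDiffAt_fst.mul (hg.contDiffAt.comp _ (contDiffAt_snd.div contDiffAt_fst (hdv x hx)))
    obtain ⟨K, t, ht, hK⟩ := hC1.exists_lipschitzOnWith
    obtain ⟨L, s, hs, hL⟩ := hd.prodMk hv.locallyLipschitz x
    have hcont : ContinuousAt (fun y => (d y, v y)) x :=
      (hd.continuous.prodMk hv.continuous).continuousAt
    exact ⟨K * L, s ∩ (fun y => (d y, v y)) ⁻¹' t, inter_mem hs (hcont ht),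
      hK.comp (hL.mono inter_subset_left) fun y hy => hy.2⟩
  · refine ⟨0, (tsupport v)ᶜ, (isClosed_tsupport v).isOpen_compl.mem_nhds hx, ?_⟩
    have hzero : ∀ y ∈ (tsupport v)ᶜ, perspective g d v y = 0 := fun y hy =>
      image_eq_zero_of_notMem_tsupport fun h => hy (tsupport_perspective_subset hg0 h)
    intro y hy z hz
    simp [hzero y hy, hzero z hz]

theorem fderiv_posPart_perspective {x : E} (hg : Differentiable ℝ g) (hg0 : g 0 = 0)
    (hv : Differentiable ℝ v) (hd0 : ∀ y, 0 ≤ d y) (hd : DifferentiableAt ℝ d x)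
    (hdv : ∀ x ∈ tsupport v, d x ≠ 0) :
    fderiv ℝ (fun y => max (perspective g d v y) 0) x =
      if 0 < g (v x / d x) then deriv g (v x / d x) • fderiv ℝ v x +
        (g (v x / d x) - v x / d x * deriv g (v x / d x)) • fderiv ℝ d x else 0 := by
  split_ifs with hgx
  · have hvx : v x ≠ 0 := by
      rintro hvx
      simp [hvx, hg0] at hgx
    have hdx : 0 < d x := (hd0 x).lt_of_ne' (hdv x (subset_tsupport v hvx))
    have hF := hasFDerivAt_perspective hg (hv x) hd hdx.ne'
    refine (hF.congr_of_eventuallyEq ?_).fderiv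
    filter_upwards [hF.continuousAt.eventually_const_lt (mul_pos hdx hgx)] with y hy
    exact max_eq_left hy.le
  · refine IsLocalMin.fderiv_eq_zero (Eventually.of_forall fun y => ?_)
    have hx : perspective g d v x ≤ 0 :=
      mul_nonpos_of_nonneg_of_nonpos (hd0 x) (not_lt.1 hgx)
    exact (max_eq_right hx).trans_le (le_max_right _ _)

end Perspective

theorem exists_contDiffBump_seq {E : Type*} [NormedAddCommGroup E] {δ : ℝ} (hδ : 0 < δ) :
    ∃ η : ℕ → ContDiffBump (0 : E),
    (∀ k, (η k).rOut ≤ δ) ∧ (∀ k, (η k).rOut = 2 * (η k).rIn) ∧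
      Tendsto (fun k => (η k).rOut) atTop (𝓝 0) := by
  refine ⟨fun k => ⟨δ / (k + 1) / 2, δ / (k + 1), by positivity, half_lt_self (by positivity)⟩,
    fun k => div_le_self hδ.le (by simp), fun k => (mul_div_cancel₀ _ two_ne_zero).symm, ?_⟩
  simpa [div_eq_mul_inv] using (tendsto_one_div_add_atTop_nhds_zero_nat (𝕜 := ℝ)).const_mul δ

section Mollify

open scoped Convolution
open ContinuousLinearMap (lsmul)

variable {E : Type*} [NormedAddCommGroup E] [NormedSpace ℝ E] [FiniteDimensional ℝ E]
  [MeasurableSpace E] [BorelSpace E] {μ : Measure E} [μ.IsAddHaarMeasure] {φ : E → ℝ} {K : ℝ≥0}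

theorem hasFDerivAt_convolution_of_lipschitzWith {η : E → ℝ} (hη : Integrable η μ)
    (hφ : LipschitzWith K φ) (hφc : HasCompactSupport φ) (x : E) :
    HasFDerivAt (η ⋆[lsmul ℝ ℝ, μ] φ) ((η ⋆[lsmul ℝ ℝ, μ] fderiv ℝ φ) x) x := by
  have hcont : ∀ z : E, Continuous fun y => φ (z - y) := fun z => hφ.continuous.comp (by fun_prop)
  obtain ⟨M, hM⟩ := hφc.exists_bound_of_continuous hφ.continuous
  refine (hasFDerivAt_integral_of_dominated_loc_of_lip (bound := fun y => ‖η y‖ * K)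
    (F := fun z y => η y • φ (z - y)) (F' := fun y => η y • fderiv ℝ φ (x - y))
    univ_mem ?_ ?_ ?_ ?_ (hη.norm.mul_const _) ?_).2
  · exact Eventually.of_forall fun z => hη.aestronglyMeasurable.smul (hcont z).aestronglyMeasurable
  · exact hη.mul_bdd (hcont x).aestronglyMeasurable (ae_of_all _ fun y => hM _)
  · exact hη.aestronglyMeasurable.smul
      ((measurable_fderiv ℝ φ).comp (measurable_const.sub measurable_id)).aestronglyMeasurable
  · filter_upwards with y
    refine LipschitzOnWith.of_dist_le_mul fun z _ z' _ => ?_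
    calc dist (η y • φ (z - y)) (η y • φ (z' - y)) = ‖η y‖ * dist (φ (z - y)) (φ (z' - y)) :=
          dist_smul₀ _ _ _
      _ ≤ ‖η y‖ * (K * dist (z - y) (z' - y)) := by gcongr; exact hφ.dist_le_mul _ _
      _ = Real.nnabs (‖η y‖ * K) * dist z z' := by
          rw [dist_sub_right, Real.coe_nnabs, abs_of_nonneg (by positivity), mul_assoc]
  · filter_upwards [(quasiMeasurePreserving_sub_left μ x).ae hφ.ae_differentiableAt] with y hy
    exact HasFDerivAt.const_smul ((hasFDerivAt_comp_sub y).2 hy.hasFDerivAt) (η y)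

theorem tsupport_normed_convolution_subset (η : ContDiffBump (0 : E)) :
    tsupport (η.normed μ ⋆[lsmul ℝ ℝ, μ] φ) ⊆ cthickening η.rOut (tsupport φ) := by
  refine closure_minimal ((support_convolution_subset _).trans ?_) isClosed_cthickening
  rintro _ ⟨a, ha, b, hb, rfl⟩
  rw [η.support_normed_eq, mem_ball_zero_iff] at ha
  refine mem_cthickening_of_dist_le (a + b) b _ _ (subset_tsupport _ hb) ?_
  rw [dist_eq_norm, add_sub_cancel_right]
  exact ha.le

theorem norm_normed_convolution_fderiv_le (hφ : LipschitzWith K φ) (η : ContDiffBump (0 : E))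
    (x : E) :
    ‖(η.normed μ ⋆[lsmul ℝ ℝ, μ] fderiv ℝ φ) x‖ ≤ K := by
  calc ‖(η.normed μ ⋆[lsmul ℝ ℝ, μ] fderiv ℝ φ) x‖ ≤ ∫ y, η.normed μ y * K ∂μ := by
        refine norm_integral_le_of_norm_le (η.integrable_normed.mul_const _)
          (ae_of_all _ fun y => ?_)
        rw [ContinuousLinearMap.lsmul_apply, norm_smul, Real.norm_of_nonneg (η.nonneg_normed y)]
        exact mul_le_mul_of_nonneg_left (norm_fderiv_le_of_lipschitz ℝ hφ) (η.nonneg_normed y)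
    _ = K := by rw [integral_mul_const, η.integral_normed, one_mul]

theorem exists_contDiff_approx_of_lipschitzWith (μ : Measure E) [μ.IsAddHaarMeasure]
    (hφ : LipschitzWith K φ) (hφc : HasCompactSupport φ) (hφ0 : ∀ x, 0 ≤ φ x) {δ : ℝ} (hδ : 0 < δ) :
    ∃ ψ : ℕ → E → ℝ, (∀ k, ContDiff ℝ ∞ (ψ k)) ∧
      (∀ k, tsupport (ψ k) ⊆ cthickening δ (tsupport φ)) ∧ (∀ k x, 0 ≤ ψ k x) ∧
      (∀ k x, ‖fderiv ℝ (ψ k) x‖ ≤ K) ∧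
      ∀ᵐ x ∂μ, Tendsto (fun k => fderiv ℝ (ψ k) x) atTop (𝓝 (fderiv ℝ φ x)) := by
  obtain ⟨η, hηδ, hη2, hη0⟩ := exists_contDiffBump_seq (E := E) hδ
  have hfderiv : ∀ k x, fderiv ℝ ((η k).normed μ ⋆[lsmul ℝ ℝ, μ] φ) x =
      ((η k).normed μ ⋆[lsmul ℝ ℝ, μ] fderiv ℝ φ) x := fun k x =>
    (hasFDerivAt_convolution_of_lipschitzWith (η k).integrable_normed hφ hφc x).fderiv
  have hloc : LocallyIntegrable (fderiv ℝ φ) μ :=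
    (memLp_top_of_bound (measurable_fderiv ℝ φ).aestronglyMeasurable K
      (ae_of_all _ fun x => norm_fderiv_le_of_lipschitz ℝ hφ)).locallyIntegrable le_top
  refine ⟨fun k => (η k).normed μ ⋆[lsmul ℝ ℝ, μ] φ, fun k => ?_, fun k => ?_, fun k x => ?_,
    fun k x => ?_, ?_⟩
  · exact (η k).hasCompactSupport_normed.contDiff_convolution_left _ (η k).contDiff_normed
      hφ.continuous.locallyIntegrable
  · exact (tsupport_normed_convolution_subset _).trans (cthickening_mono (hηδ k) _)
  · exact integral_nonneg fun y => mul_nonneg ((η k).nonneg_normed y) (hφ0 _)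
  · rw [hfderiv]; exact norm_normed_convolution_fderiv_le hφ _ _
  · simp only [hfderiv]
    exact ContDiffBump.ae_convolution_tendsto_right_of_locallyIntegrable hη0
      (Eventually.of_forall fun k => (hη2 k).le) hloc

end Mollify

section Gradient

variable {F : Type*} [NormedAddCommGroup F] [InnerProductSpace ℝ F] [CompleteSpace F]

theorem norm_gradient (f : F → ℝ) (x : F) : ‖∇ f x‖ = ‖fderiv ℝ f x‖ :=
  LinearIsometryEquiv.norm_map _ _

theorem fderiv_gradient_self (f : F → ℝ) (x : F) : fderiv ℝ f x (∇ f x) = ‖fderiv ℝ f x‖ ^ 2 := by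
  rw [← inner_gradient_left, real_inner_self_eq_norm_sq, norm_gradient]

theorem abs_fderiv_gradient_le (f φ : F → ℝ) (x : F) :
    |fderiv ℝ φ x (∇ f x)| ≤ ‖fderiv ℝ φ x‖ * ‖fderiv ℝ f x‖ := by
  simpa only [norm_gradient, Real.norm_eq_abs] using (fderiv ℝ φ x).le_opNorm (∇ f x)

end Gradient

section Laplacian

variable {n : ℕ} {f φ : EuclideanSpace ℝ (Fin n) → ℝ}

theorem fderiv_gradient_eq_sum (f φ : EuclideanSpace ℝ (Fin n) → ℝ)
    (x : EuclideanSpace ℝ (Fin n)) :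
    fderiv ℝ φ x (∇ f x) =
      ∑ i, fderiv ℝ f x (EuclideanSpace.single i 1) * fderiv ℝ φ x (EuclideanSpace.single i 1) := by
  conv_lhs => rw [← (EuclideanSpace.basisFun (Fin n) ℝ).sum_repr' (∇ f x)]
  simp [inner_gradient_right]

theorem measurable_fderiv_gradient (f φ : EuclideanSpace ℝ (Fin n) → ℝ) :
    Measurable fun x => fderiv ℝ φ x (∇ f x) := by
  simp_rw [fderiv_gradient_eq_sum]
  exact Finset.measurable_sum _ fun i _ =>
    (measurable_fderiv_apply_const ℝ f _).mul (measurable_fderiv_apply_const ℝ φ _)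

theorem integral_mul_lapl {K : ℝ≥0} (hf : LipschitzWith K f) (hφ : ContDiff ℝ 2 φ)
    (hφc : HasCompactSupport φ) : ∫ x, f x * lapl φ x = -∫ x, fderiv ℝ φ x (∇ f x) := by
  let e : Fin n → EuclideanSpace ℝ (Fin n) := fun i => EuclideanSpace.single i 1
  let φ' : Fin n → EuclideanSpace ℝ (Fin n) → ℝ := fun i x => fderiv ℝ φ x (e i)
  have hφ' : ∀ i, ContDiff ℝ 1 (φ' i) := fun i =>
    (hφ.fderiv_right (m := 1) one_add_one_eq_two.le).clm_apply contDiff_const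
  have hφ'c : ∀ i, HasCompactSupport (φ' i) := fun i => hφc.fderiv_apply ℝ (e i)
  have hφ''c : ∀ i, HasCompactSupport fun x => fderiv ℝ (φ' i) x (e i) := fun i =>
    (hφ'c i).fderiv_apply ℝ (e i)
  have hparts : ∀ i, ∫ x, f x * fderiv ℝ (φ' i) x (e i) = -∫ x, fderiv ℝ f x (e i) * φ' i x := by
    intro i
    obtain ⟨L, hL⟩ := (hφ' i).lipschitzWith_of_hasCompactSupport (hφ'c i) one_ne_zero
    have hibp := hf.integral_lineDeriv_mul_eq (μ := volume) hL (hφ'c i) (e i)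
    have hlhs : ∫ x, lineDeriv ℝ f x (e i) * φ' i x = ∫ x, fderiv ℝ f x (e i) * φ' i x :=
      integral_congr_ae <| by
        filter_upwards [hf.ae_differentiableAt] with x hx
        rw [hx.lineDeriv_eq_fderiv]
    rw [← hlhs, hibp, ← integral_neg]
    congr 1 with x
    rw [((hφ' i).differentiable one_ne_zero x).lineDeriv_eq_fderiv, map_neg]
    ring
  have hint₁ : ∀ i, Integrable fun x => f x * fderiv ℝ (φ' i) x (e i) := fun i =>
    (hf.continuous.mul (((hφ' i).continuous_fderiv one_ne_zero).clm_apply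
      continuous_const)).integrable_of_hasCompactSupport (hφ''c i).mul_left
  have hint₂ : ∀ i, Integrable fun x => fderiv ℝ f x (e i) * φ' i x := fun i =>
    ((hφ' i).continuous.integrable_of_hasCompactSupport (hφ'c i)).bdd_mul
      (c := K * ‖e i‖) (measurable_fderiv_apply_const ℝ f (e i)).aestronglyMeasurable
      (ae_of_all _ fun x => (fderiv ℝ f x).le_of_opNorm_le (norm_fderiv_le_of_lipschitz ℝ hf) _)
  calc ∫ x, f x * lapl φ x = ∑ i, ∫ x, f x * fderiv ℝ (φ' i) x (e i) := by
        rw [← integral_finsetSum _ fun i _ => hint₁ i]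
        simp only [lapl, Finset.mul_sum, φ', e]
    _ = -∑ i, ∫ x, fderiv ℝ f x (e i) * φ' i x := by simp only [hparts, Finset.sum_neg_distrib]
    _ = -∫ x, fderiv ℝ φ x (∇ f x) := by
        rw [← integral_finsetSum _ fun i _ => hint₂ i]
        simp only [fderiv_gradient_eq_sum, φ', e]

theorem lapl_eq_zero_of_notMem_tsupport {x : EuclideanSpace ℝ (Fin n)} (hx : x ∉ tsupport φ) :
    lapl φ x = 0 := by
  refine Finset.sum_eq_zero fun i _ => ?_
  have h : x ∉ tsupport fun y => fderiv ℝ φ y (EuclideanSpace.single i 1) :=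
    fun h => hx (tsupport_fderiv_apply_subset ℝ _ h)
  rw [fderiv_of_notMem_tsupport ℝ h, zero_apply]

/-- `-Δf ≥ 0` on `Ω` in the sense of distributions. Since `f` need not be smooth, the Laplacian is
moved onto nonnegative test functions supported in `Ω`. -/
def DistribSuperharmonicOn {n : ℕ} (f : EuclideanSpace ℝ (Fin n) → ℝ)
    (Ω : Set (EuclideanSpace ℝ (Fin n))) : Prop :=
  ∀ φ : EuclideanSpace ℝ (Fin n) → ℝ, ContDiff ℝ ∞ φ → HasCompactSupport φ → tsupport φ ⊆ Ω →
    (∀ x, 0 ≤ φ x) → ∫ x in Ω, f x * lapl φ x ≤ 0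

theorem DistribSuperharmonicOn.integral_fderiv_gradient_nonneg {Ω : Set (EuclideanSpace ℝ (Fin n))}
    {K L : ℝ≥0} (hfΩ : DistribSuperharmonicOn f Ω) (hΩ : IsOpen Ω) (hf : LipschitzWith K f)
    (hφ : LipschitzWith L φ) (hφc : HasCompactSupport φ) (hφΩ : tsupport φ ⊆ Ω)
    (hφ0 : ∀ x, 0 ≤ φ x) : 0 ≤ ∫ x, fderiv ℝ φ x (∇ f x) := by
  obtain ⟨δ, hδ, hδΩ⟩ := hφc.isCompact.exists_cthickening_subset_open hΩ hφΩ
  have hS : IsCompact (cthickening δ (tsupport φ)) := hφc.isCompact.cthickening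
  obtain ⟨ψ, hψ, hψS, hψ0, hψL, hψlim⟩ :=
    exists_contDiff_approx_of_lipschitzWith volume hφ hφc hφ0 hδ
  have hψnonneg : ∀ k, 0 ≤ ∫ x, fderiv ℝ (ψ k) x (∇ f x) := by
    intro k
    have hψc : HasCompactSupport (ψ k) := hS.of_isClosed_subset (isClosed_tsupport _) (hψS k)
    have h := hfΩ (ψ k) (hψ k) hψc ((hψS k).trans hδΩ) (hψ0 k)
    rw [setIntegral_eq_integral_of_forall_compl_eq_zero fun x hx => ?_,
      integral_mul_lapl hf ((hψ k).of_le (by norm_cast)) hψc] at h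
    · linarith
    · rw [lapl_eq_zero_of_notMem_tsupport fun hx' => hx (hδΩ (hψS k hx')), mul_zero]
  refine ge_of_tendsto' (tendsto_integral_of_dominated_convergence
    ((cthickening δ (tsupport φ)).indicator fun _ => (L * K : ℝ)) (fun k => ?_) ?_ (fun k => ?_) ?_)
    hψnonneg
  · exact (measurable_fderiv_gradient f (ψ k)).aestronglyMeasurable
  · rw [integrable_indicator_iff hS.measurableSet]
    exact integrableOn_const hS.measure_lt_top.ne
  · refine ae_of_all _ fun x => ?_
    by_cases hx : x ∈ cthickening δ (tsupport φ)
    · rw [indicator_of_mem hx]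
      exact (abs_fderiv_gradient_le f (ψ k) x).trans
        (mul_le_mul (hψL k x) (norm_fderiv_le_of_lipschitz ℝ hf) (norm_nonneg _) L.2)
    · rw [indicator_of_notMem hx, fderiv_of_notMem_tsupport ℝ fun h => hx (hψS k h)]
      simp
  · filter_upwards [hψlim] with x hx
    exact ((ContinuousLinearMap.apply ℝ ℝ (∇ f x)).continuous.tendsto _).comp hx

end Laplacian

section InfDist

variable {E : Type*} [NormedAddCommGroup E] [NormedSpace ℝ E] {s : Set E} {x y : E}

theorem infDist_add_smul_sub (hy : y ∈ s) (hxy : infDist x s = dist x y) {t : ℝ}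
    (ht : t ∈ Icc (0 : ℝ) 1) : infDist (x + t • (y - x)) s = (1 - t) * dist x y := by
  have hline : x + t • (y - x) = AffineMap.lineMap x y t := by
    rw [AffineMap.lineMap_apply_module']; exact add_comm _ _
  apply le_antisymm
  · refine (infDist_le_dist_of_mem hy).trans_eq ?_
    rw [hline, dist_lineMap_right, Real.norm_of_nonneg (sub_nonneg.2 ht.2)]
  · have h := infDist_le_infDist_add_dist (s := s) (x := x) (y := x + t • (y - x))
    rw [hxy, hline, dist_left_lineMap, Real.norm_of_nonneg ht.1] at h
    rw [hline]
    linarith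

theorem norm_fderiv_infDist [ProperSpace E] (hs : IsClosed s) (hsne : s.Nonempty) (hx : x ∉ s)
    (hd : DifferentiableAt ℝ (fun z => infDist z s) x) :
    ‖fderiv ℝ (fun z => infDist z s) x‖ = 1 := by
  refine le_antisymm (by simpa using norm_fderiv_le_of_lipschitz ℝ (lipschitz_infDist_pt s)) ?_
  obtain ⟨y, hy, hxy⟩ := hs.exists_infDist_eq_dist hsne x
  have hpos : 0 < dist x y := dist_pos.2 (by rintro rfl; exact hx hy)
  set L := fderiv ℝ (fun z => infDist z s) x
  have hchain : HasDerivWithinAt (fun t : ℝ => (1 - t) * dist x y) (L (y - x)) (Icc 0 1) 0 := by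
    have hseg : HasDerivAt (fun t : ℝ => x + t • (y - x)) (y - x) 0 := by
      simpa using ((hasDerivAt_id (0 : ℝ)).smul_const (y - x)).const_add x
    have hL : HasFDerivAt (fun z => infDist z s) L (x + (0 : ℝ) • (y - x)) := by
      simpa using hd.hasFDerivAt
    have hcomp := hL.comp_hasDerivAt (0 : ℝ) hseg
    exact hcomp.hasDerivWithinAt.congr
      (fun t ht => (infDist_add_smul_sub hy hxy ht).symm)
      (infDist_add_smul_sub hy hxy (by simp)).symm
  have hlin : HasDerivWithinAt (fun t : ℝ => (1 - t) * dist x y) (-dist x y) (Icc 0 1) 0 := by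
    simpa using (((hasDerivAt_id (0 : ℝ)).const_sub 1).mul_const (dist x y)).hasDerivWithinAt
  have hLyx : L (y - x) = -dist x y :=
    (uniqueDiffOn_Icc one_pos 0 (by simp)).eq_deriv _ hchain hlin
  have hle := L.le_opNorm (y - x)
  rw [hLyx, norm_neg, Real.norm_of_nonneg dist_nonneg, ← dist_eq_norm, dist_comm y x] at hle
  exact le_of_mul_le_mul_right (by rwa [one_mul]) hpos

end InfDist

section HardyDifference

variable {E : Type*} [NormedAddCommGroup E] [NormedSpace ℝ E] [MeasureSpace E]

/-- The difference between the two sides of the `L^p` Hardy inequality on `Ω` for the weight `d`,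
with the sharp constant of the case where `d` is the distance to the boundary. -/
noncomputable def hardyDifference (p : ℝ) (d : E → ℝ) (Ω : Set E) (u : E → ℝ) : ℝ :=
  (∫ y in Ω, ‖fderiv ℝ u y‖ ^ p) - ((p - 1) / p) ^ p * ∫ y in Ω, |u y| ^ p / d y ^ p

theorem hardyDifference_const_smul (p : ℝ) (d : E → ℝ) (Ω : Set E) (u : E → ℝ) (l : ℝ) :
    hardyDifference p d Ω (l • u) = |l| ^ p * hardyDifference p d Ω u := by
  simp only [hardyDifference, fderiv_const_smul_field, Pi.smul_apply, norm_smul, smul_eq_mul,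
    abs_mul, Real.norm_eq_abs, Real.mul_rpow (abs_nonneg _) (norm_nonneg _),
    Real.mul_rpow (abs_nonneg _) (abs_nonneg _), mul_div_assoc, integral_const_mul]
  ring

end HardyDifference

section Integrability

variable {X F : Type*} [TopologicalSpace X] [MeasurableSpace X] [OpensMeasurableSpace X]
  {μ : Measure X} [IsFiniteMeasureOnCompacts μ] {p : ℝ}

theorem integrable_norm_rpow_of_hasCompactSupport [NormedAddCommGroup F] {f : X → F}
    (hf : Continuous f) (hfc : HasCompactSupport f) (hp : 0 < p) :
    Integrable (fun x => ‖f x‖ ^ p) μ :=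
  (hf.norm.rpow_const fun _ => Or.inr hp.le).integrable_of_hasCompactSupport
    (hfc.comp_left (g := fun y : F => ‖y‖ ^ p) (by simp [hp.ne']))

theorem integrable_abs_rpow_div_rpow {u d : X → ℝ} (hu : Continuous u) (huc : HasCompactSupport u)
    (hd : Continuous d) (hd0 : ∀ x, 0 ≤ d x) (hdu : ∀ x ∈ tsupport u, d x ≠ 0) (hp : 0 < p) :
    Integrable (fun x => |u x| ^ p / d x ^ p) μ := by
  have hcont : Continuous fun x => u x / d x := continuous_of_tsupport fun x hx =>
    hu.continuousAt.div hd.continuousAt <| hdu x <|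
      closure_mono (Function.support_subset_iff'.2 fun y hy => by
        simp [Function.notMem_support.1 hy]) hx
  have hsupp : HasCompactSupport fun x => u x / d x := by
    simpa only [div_eq_mul_inv] using! huc.mul_right (f' := fun x => (d x)⁻¹)
  refine (integrable_norm_rpow_of_hasCompactSupport hcont hsupp hp).congr (ae_of_all _ fun x => ?_)
  simp only [Real.norm_eq_abs]
  rw [abs_div, abs_of_nonneg (hd0 x), Real.div_rpow (abs_nonneg _) (hd0 x)]

end Integrability

/-- The nonnegative test function `d * g (H * u / d)₊`, `H = (p - 1) / p`, with which the
superharmonicity of `d` is tested. -/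
noncomputable def hardyTest {X : Type*} (p q : ℝ) (d u : X → ℝ) (x : X) : ℝ :=
  max (perspective (hardyProfile p q) d (((p - 1) / p) • u) x) 0

theorem tsupport_hardyTest_subset {X : Type*} [TopologicalSpace X] {p q : ℝ} {d u : X → ℝ}
    (hp : p ≠ 0) (hq : q ≠ 0) : tsupport (hardyTest p q d u) ⊆ tsupport u := by
  refine closure_mono fun x hx hux => hx ?_
  simp [hardyTest, perspective, hux, hardyProfile_zero hp hq]

section HardyTest

variable {F : Type*} [NormedAddCommGroup F] {p q : ℝ} {d u : F → ℝ}

theorem exists_lipschitzWith_hardyTest [NormedSpace ℝ F] [ProperSpace F] (hp : 1 < p) (hq : 1 < q)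
    (hu : ContDiff ℝ 1 u) (huc : HasCompactSupport u) (hd : LocallyLipschitz d)
    (hdu : ∀ x ∈ tsupport u, d x ≠ 0) : ∃ L, LipschitzWith L (hardyTest p q d u) := by
  set v := ((p - 1) / p) • u
  have hvu : tsupport v ⊆ tsupport u := closure_mono (Function.support_const_smul_subset _ u)
  have hg0 : hardyProfile p q 0 = 0 := hardyProfile_zero (by positivity) (by positivity)
  obtain ⟨L, hL⟩ := exists_lipschitzWith_of_locallyLipschitz_of_hasCompactSupport
    (locallyLipschitz_perspective (contDiff_hardyProfile hp hq) hg0 (hu.const_smul ((p - 1) / p)) hd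
      fun x hx => hdu x (hvu hx))
    (huc.of_isClosed_subset (isClosed_tsupport _) ((tsupport_perspective_subset hg0).trans hvu))
  exact ⟨L, hL.max_const 0⟩

variable [InnerProductSpace ℝ F] [CompleteSpace F] {x : F}

theorem fderiv_hardyTest_gradient (hp : 1 < p) (hq : 1 < q) (hu : Differentiable ℝ u)
    (hd0 : ∀ y, 0 ≤ d y) (hdu : ∀ y ∈ tsupport u, d y ≠ 0) (hd : DifferentiableAt ℝ d x)
    (hdx : ‖fderiv ℝ d x‖ = 1) {s : ℝ} (hs : s = (p - 1) / p * u x / d x) :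
    p / (p - 1) * fderiv ℝ (hardyTest p q d u) x (∇ d x) =
      if 0 < hardyProfile p q s then
        deriv (hardyProfile p q) s * fderiv ℝ u x (∇ d x) +
          p / (p - 1) * (hardyProfile p q s - s * deriv (hardyProfile p q) s)
      else 0 := by
  set v := ((p - 1) / p) • u
  have hvu : tsupport v ⊆ tsupport u := closure_mono (Function.support_const_smul_subset _ u)
  have hφ := fderiv_posPart_perspective
    ((contDiff_hardyProfile hp hq).differentiable one_ne_zero)
    (hardyProfile_zero (by positivity) (by positivity)) (hu.const_smul ((p - 1) / p)) hd0 hd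
    fun y hy => hdu y (hvu hy)
  have hvs : v x / d x = s := hs.symm
  have hvx : fderiv ℝ v x = ((p - 1) / p) • fderiv ℝ u x := congrFun (fderiv_const_smul_field _) x
  have hdd : fderiv ℝ d x (∇ d x) = 1 := by rw [fderiv_gradient_self, hdx, one_pow]
  have hp1 : p - 1 ≠ 0 := (sub_pos.2 hp).ne'
  have hp0 : p ≠ 0 := by positivity
  rw [hvs, hvx] at hφ
  change fderiv ℝ (hardyTest p q d u) x = _ at hφ
  rw [hφ]
  split_ifs
  · simp only [add_apply, smul_apply, smul_eq_mul, hdd]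
    field_simp
  · rw [zero_apply, mul_zero]

theorem exists_fderiv_hardyTest_le (hq : 1 < q) (hqp : q < p) :
    ∃ c > 0, ∃ A ≥ 0, ∀ {d u : F → ℝ} {x : F}, Differentiable ℝ u → (∀ y, 0 ≤ d y) →
      (∀ y ∈ tsupport u, d y ≠ 0) → DifferentiableAt ℝ d x → ‖fderiv ℝ d x‖ = 1 →
      c * ‖fderiv ℝ u x‖ ^ q + p / (p - 1) * fderiv ℝ (hardyTest p q d u) x (∇ d x) ≤
        ‖fderiv ℝ u x‖ ^ p - ((p - 1) / p) ^ p * (|u x| ^ p / d x ^ p) + A := by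
  obtain ⟨c, hc, A, hA, hyoung⟩ := exists_hardyProfile_le hq hqp
  refine ⟨c, hc, A, hA, fun {d u x} hu hd0 hdu hd hdx => ?_⟩
  have hp : 1 < p := hq.trans hqp
  have hH : 0 ≤ (p - 1) / p := div_nonneg (sub_pos.2 hp).le (by positivity)
  have hs : |(p - 1) / p * u x / d x| ^ p = ((p - 1) / p) ^ p * (|u x| ^ p / d x ^ p) := by
    rw [abs_div, abs_mul, abs_of_nonneg hH, abs_of_nonneg (hd0 x),
      Real.div_rpow (by positivity) (hd0 x), Real.mul_rpow hH (abs_nonneg _), mul_div_assoc]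
  rw [fderiv_hardyTest_gradient hp hq hu hd0 hdu hd hdx rfl, ← hs]
  exact hyoung _ _ _ (by simpa [hdx] using abs_fderiv_gradient_le d u x)

end HardyTest

section ImprovedHardy

variable {n : ℕ} {p q : ℝ} {d u : EuclideanSpace ℝ (Fin n) → ℝ} {Ω : Set (EuclideanSpace ℝ (Fin n))}
  {K : ℝ≥0}

theorem integrable_fderiv_gradient {φ : EuclideanSpace ℝ (Fin n) → ℝ} {K L : ℝ≥0}
    (hd : LipschitzWith K d) (hφ : LipschitzWith L φ) (hφc : HasCompactSupport φ) :
    Integrable fun x => fderiv ℝ φ x (∇ d x) := by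
  have hsupp : (Function.support fun x => fderiv ℝ φ x (∇ d x)) ⊆ tsupport φ := by
    refine Function.support_subset_iff'.2 fun x hx => ?_
    simp [fderiv_of_notMem_tsupport ℝ hx]
  rw [← integrableOn_iff_integrable_of_support_subset hsupp]
  refine Measure.integrableOn_of_bounded (M := L * K) hφc.isCompact.measure_lt_top.ne
    (measurable_fderiv_gradient d φ).aestronglyMeasurable (ae_of_all _ fun x => ?_)
  exact (abs_fderiv_gradient_le d φ x).trans (mul_le_mul (norm_fderiv_le_of_lipschitz ℝ hφ)
    (norm_fderiv_le_of_lipschitz ℝ hd) (norm_nonneg _) L.2)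

theorem DistribSuperharmonicOn.setIntegral_fderiv_hardyTest_nonneg
    (hdΩ : DistribSuperharmonicOn d Ω) (hΩ : IsOpen Ω) (hd : LipschitzWith K d) (hp : 1 < p)
    (hq : 1 < q) (hu : ContDiff ℝ 1 u) (huc : HasCompactSupport u) (huΩ : tsupport u ⊆ Ω)
    (hdu : ∀ x ∈ tsupport u, d x ≠ 0) :
    IntegrableOn (fun x => fderiv ℝ (hardyTest p q d u) x (∇ d x)) Ω ∧
      0 ≤ ∫ x in Ω, fderiv ℝ (hardyTest p q d u) x (∇ d x) := by
  obtain ⟨L, hφ⟩ := exists_lipschitzWith_hardyTest hp hq hu huc hd.locallyLipschitz hdu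
  have hφu : tsupport (hardyTest p q d u) ⊆ tsupport u :=
    tsupport_hardyTest_subset (by positivity) (by positivity)
  have hφc : HasCompactSupport (hardyTest p q d u) :=
    huc.of_isClosed_subset (isClosed_tsupport _) hφu
  refine ⟨(integrable_fderiv_gradient hd hφ hφc).integrableOn, ?_⟩
  rw [setIntegral_eq_integral_of_forall_compl_eq_zero fun x hx => ?_]
  · exact hdΩ.integral_fderiv_gradient_nonneg hΩ hd hφ hφc (hφu.trans huΩ)
      fun x => le_max_right _ _
  · rw [fderiv_of_notMem_tsupport ℝ fun h => hx (huΩ (hφu h)), zero_apply]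

/-- The properties of the distance to the complement of `Ω` that drive the improved Hardy
inequality: superharmonicity and the eikonal equation `|∇d| = 1`. -/
structure IsHardyWeight {n : ℕ} (d : EuclideanSpace ℝ (Fin n) → ℝ)
    (Ω : Set (EuclideanSpace ℝ (Fin n))) : Prop where
  superharmonic : DistribSuperharmonicOn d Ω
  lipschitz : ∃ K : ℝ≥0, LipschitzWith K d
  nonneg : ∀ x, 0 ≤ d x
  ne_zero : ∀ x ∈ Ω, d x ≠ 0
  norm_fderiv : ∀ᵐ x, x ∈ Ω → ‖fderiv ℝ d x‖ = 1

theorem exists_mul_integral_rpow_le_hardyDifference_add (n : ℕ) (hq : 1 < q) (hqp : q < p) :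
    ∃ c > 0, ∃ A ≥ 0, ∀ {d u : EuclideanSpace ℝ (Fin n) → ℝ} {Ω : Set (EuclideanSpace ℝ (Fin n))},
      IsHardyWeight d Ω → IsOpen Ω → volume Ω ≠ ⊤ → ContDiff ℝ 1 u → HasCompactSupport u →
      tsupport u ⊆ Ω →
      c * ∫ y in Ω, ‖fderiv ℝ u y‖ ^ q ≤ hardyDifference p d Ω u + A * volume.real Ω := by
  obtain ⟨c, hc, A, hA, hpt⟩ := exists_fderiv_hardyTest_le (F := EuclideanSpace ℝ (Fin n)) hq hqp
  refine ⟨c, hc, A, hA, fun {d u Ω} hdΩ hΩ hvol hu huc huΩ => ?_⟩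
  obtain ⟨hsup, ⟨K, hd⟩, hd0, hdne, hd1⟩ := hdΩ
  have hdu : ∀ x ∈ tsupport u, d x ≠ 0 := fun x hx => hdne x (huΩ hx)
  have hp : 1 < p := hq.trans hqp
  have hH : 0 ≤ p / (p - 1) := div_nonneg (by positivity) (sub_pos.2 hp).le
  obtain ⟨hGint, hG0⟩ := hsup.setIntegral_fderiv_hardyTest_nonneg hΩ hd hp hq hu huc huΩ hdu
  set G := fun x => fderiv ℝ (hardyTest p q d u) x (∇ d x)
  have hI : ∀ {e : ℝ}, 0 < e → IntegrableOn (fun y => ‖fderiv ℝ u y‖ ^ e) Ω := fun he =>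
    (integrable_norm_rpow_of_hasCompactSupport (hu.continuous_fderiv one_ne_zero)
      (huc.fderiv ℝ) he).integrableOn
  have hIq : IntegrableOn (fun y => c * ‖fderiv ℝ u y‖ ^ q) Ω := (hI (by positivity)).const_mul c
  have hIp : IntegrableOn (fun y => ‖fderiv ℝ u y‖ ^ p) Ω := hI (by positivity)
  have hIG : IntegrableOn (fun y => p / (p - 1) * G y) Ω := hGint.const_mul _
  have hIu : IntegrableOn (fun y => ((p - 1) / p) ^ p * (|u y| ^ p / d y ^ p)) Ω :=
    ((integrable_abs_rpow_div_rpow hu.continuous huc hd.continuous hd0 hdu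
      (by positivity)).const_mul _).integrableOn
  have hIpu : IntegrableOn
      (fun y => ‖fderiv ℝ u y‖ ^ p - ((p - 1) / p) ^ p * (|u y| ^ p / d y ^ p)) Ω := hIp.sub hIu
  have hIA : IntegrableOn (fun _ => A) Ω := integrableOn_const hvol
  calc c * ∫ y in Ω, ‖fderiv ℝ u y‖ ^ q
      ≤ c * (∫ y in Ω, ‖fderiv ℝ u y‖ ^ q) + p / (p - 1) * ∫ y in Ω, G y :=
        le_add_of_nonneg_right (mul_nonneg hH hG0)
    _ = ∫ y in Ω, (c * ‖fderiv ℝ u y‖ ^ q + p / (p - 1) * G y) := by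
        rw [integral_add hIq hIG, integral_const_mul, integral_const_mul]
    _ ≤ ∫ y in Ω, (‖fderiv ℝ u y‖ ^ p - ((p - 1) / p) ^ p * (|u y| ^ p / d y ^ p) + A) := by
        refine integral_mono_ae (hIq.add hIG) (hIpu.add hIA) ?_
        filter_upwards [ae_restrict_of_ae hd.ae_differentiableAt,
          (ae_restrict_iff' hΩ.measurableSet).2 hd1] with y hdy hdy1
        exact hpt (hu.differentiable one_ne_zero) hd0 hdu hdy hdy1
    _ = hardyDifference p d Ω u + A * volume.real Ω := by
        rw [integral_add hIpu hIA, integral_sub hIp hIu, integral_const_mul, setIntegral_const,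
          smul_eq_mul, mul_comm A, hardyDifference]

end ImprovedHardy

theorem le_two_mul_rpow_of_forall_rpow_mul_le {p q I J V : ℝ} (hp : p ≠ 0) (hI : 0 < I)
    (hV : 0 < V) (h : ∀ l > 0, l ^ q * J ≤ l ^ p * I + V) :
    J ≤ 2 * V ^ (1 - q / p) * I ^ (q / p) := by
  -- `l = (V / I) ^ (1 / p)` balances the two terms on the right of `h`.
  have hl : 0 < V / I := div_pos hV hI
  have hbalanced := h _ (Real.rpow_pos_of_pos hl p⁻¹)
  rw [Real.rpow_inv_rpow hl.le hp, ← Real.rpow_mul hl.le, inv_mul_eq_div,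
    div_mul_cancel₀ V hI.ne', ← two_mul, Real.div_rpow hV.le hI.le, div_mul_eq_mul_div,
    div_le_iff₀ (by positivity)] at hbalanced
  rw [Real.rpow_sub hV, Real.rpow_one, ← mul_div_assoc, div_mul_eq_mul_div,
    le_div_iff₀ (by positivity), mul_comm]
  exact hbalanced

theorem nonneg_of_forall_rpow_mul_le {p q I J V : ℝ} (hp : 0 < p) (hJ : 0 ≤ J)
    (h : ∀ l > 0, l ^ q * J ≤ l ^ p * I + V) : 0 ≤ I := by
  by_contra! hI
  have hlim : Tendsto (fun l : ℝ => l ^ p * I + V) atTop atBot :=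
    tendsto_atBot_add_const_right _ _ ((tendsto_rpow_atTop hp).atTop_mul_const_of_neg hI)
  obtain ⟨l, hl, hl0⟩ := ((hlim.eventually_lt_atBot 0).and (eventually_gt_atTop 0)).exists
  linarith [h l hl0, mul_nonneg (Real.rpow_nonneg hl0.le q) hJ]

theorem le_mul_rpow_of_forall_rpow_mul_le {p q I J V : ℝ} (hq : 0 < q) (hqp : q < p) (hJ : 0 ≤ J)
    (hV : 0 ≤ V) (h : ∀ l > 0, l ^ q * J ≤ l ^ p * I + V) :
    J ≤ 2 * V ^ (1 - q / p) * I ^ (q / p) := by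
  have hp : 0 < p := hq.trans hqp
  have hI : 0 ≤ I := nonneg_of_forall_rpow_mul_le hp hJ h
  have he : 0 < 1 - q / p := sub_pos.2 ((div_lt_one hp).2 hqp)
  have hcont : Continuous fun ε : ℝ => 2 * (V + ε) ^ (1 - q / p) * (I + ε) ^ (q / p) := by
    fun_prop (disch := positivity)
  have hlim : Tendsto (fun ε : ℝ => 2 * (V + ε) ^ (1 - q / p) * (I + ε) ^ (q / p)) (𝓝[>] 0)
      (𝓝 (2 * V ^ (1 - q / p) * I ^ (q / p))) := by
    simpa using hcont.continuousWithinAt.tendsto (x := (0 : ℝ)) (s := Ioi 0)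
  refine ge_of_tendsto hlim ?_
  filter_upwards [self_mem_nhdsWithin] with ε hε
  have hε0 : 0 < ε := hε
  refine le_two_mul_rpow_of_forall_rpow_mul_le hp.ne' (by positivity) (by positivity)
    fun l hl => (h l hl).trans ?_
  gcongr <;> linarith

theorem enorm_le_lintegral_Ioi_fderiv_ray {E F : Type*} [NormedAddCommGroup E] [NormedSpace ℝ E]
    [NormedAddCommGroup F] [NormedSpace ℝ F] {u : E → F} (hu : ContDiff ℝ 1 u)
    (huc : HasCompactSupport u) (x : E) {e : E} (he : ‖e‖ = 1) :
    ‖u x‖ₑ ≤ ∫⁻ r in Ioi (0 : ℝ), ‖fderiv ℝ u (x + r • e)‖ₑ := by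
  have hray : Isometry fun r : ℝ => x + -r • e := Isometry.of_dist_eq fun r t => by
    simp [dist_eq_norm, ← sub_smul, norm_smul, he, neg_add_eq_sub, abs_sub_comm]
  have hderiv (r : ℝ) :
      ‖deriv (fun r : ℝ => u (x + -r • e)) r‖ₑ ≤ ‖fderiv ℝ u (x + -r • e)‖ₑ := by
    have hline : HasDerivAt (fun r : ℝ => x + -r • e) (-e) r := by
      simpa using ((hasDerivAt_id r).neg.smul_const e).const_add x
    have := ((hu.differentiable one_ne_zero _).hasFDerivAt.comp_hasDerivAt r hline).deriv
    rw [Function.comp_def] at this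
    rw [this]
    simpa [enorm_le_iff_norm_le, he] using (fderiv ℝ u (x + -r • e)).le_opNorm (-e)
  calc ‖u x‖ₑ = ‖u (x + -(0 : ℝ) • e)‖ₑ := by simp
    _ ≤ ∫⁻ r in Iic (0 : ℝ), ‖deriv (fun r : ℝ => u (x + -r • e)) r‖ₑ :=
        (huc.comp_isClosedEmbedding hray.isClosedEmbedding).enorm_le_lintegral_Ici_deriv
          (hu.comp (by fun_prop)) 0
    _ ≤ ∫⁻ r in Iic (0 : ℝ), ‖fderiv ℝ u (x + -r • e)‖ₑ := lintegral_mono fun r => hderiv r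
    _ = ∫⁻ r in Ici (0 : ℝ), ‖fderiv ℝ u (x + r • e)‖ₑ := by
        have hcont : Continuous fun r : ℝ => fderiv ℝ u (x + r • e) :=
          (hu.continuous_fderiv one_ne_zero).comp (by fun_prop)
        simpa using (Measure.measurePreserving_neg (volume : Measure ℝ)).setLIntegral_comp_preimage
          (measurableSet_Ici (a := (0 : ℝ))) hcont.enorm.measurable
    _ = ∫⁻ r in Ioi (0 : ℝ), ‖fderiv ℝ u (x + r • e)‖ₑ := setLIntegral_congr Ioi_ae_eq_Ici.symm

theorem sub_one_mul_conjExponent_lt {n q : ℝ} (hn : 1 ≤ n) (hq : n < q) :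
    (n - 1) * q.conjExponent < n := by
  rw [Real.conjExponent, ← mul_div_assoc, div_lt_iff₀ (by linarith)]
  linarith

theorem one_sub_conjExponent_mul_div {n q : ℝ} (hn : n ≠ 0) (hq : 1 < q) :
    (1 - (n - 1) * q.conjExponent / n) * (1 / q.conjExponent) = 1 / n - 1 / q := by
  have hq0 : q ≠ 0 := by positivity
  have hq1 : q - 1 ≠ 0 := (sub_pos.2 hq).ne'
  rw [Real.conjExponent]
  field_simp
  ring

section Potential

open Module (finrank)

variable {E F : Type*} [NormedAddCommGroup E] [NormedSpace ℝ E] [FiniteDimensional ℝ E]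
  [Nontrivial E] [MeasurableSpace E] [BorelSpace E] [NormedAddCommGroup F] [NormedSpace ℝ F]
  (μ : Measure E) [μ.IsAddHaarMeasure]

theorem lintegral_eq_lintegral_toSphere {f : E → ENNReal} (hf : Measurable f) :
    ∫⁻ z, f z ∂μ = ∫⁻ e : sphere (0 : E) 1, (∫⁻ r in Ioi (0 : ℝ),
      ENNReal.ofReal (r ^ (finrank ℝ E - 1)) * f (r • (e : E))) ∂μ.toSphere := by
  have hm : Measurable fun y : sphere (0 : E) 1 × Ioi (0 : ℝ) => f (y.2.1 • (y.1 : E)) :=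
    hf.comp (by fun_prop)
  have hpolar : ∀ a : ({0}ᶜ : Set E), f (((homeomorphUnitSphereProd E a).2 : ℝ) •
      ((homeomorphUnitSphereProd E a).1 : E)) = f a := fun a => by
    have : ‖a.1‖ ≠ 0 := norm_ne_zero_iff.2 a.2
    simp [smul_smul, this]
  calc ∫⁻ z, f z ∂μ = ∫⁻ z : ({0}ᶜ : Set E), f z ∂μ.comap Subtype.val := by
        rw [lintegral_subtype_comap (measurableSet_singleton _).compl f, restrict_compl_singleton]
    _ = ∫⁻ y : sphere (0 : E) 1 × Ioi (0 : ℝ), f (y.2.1 • (y.1 : E))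
          ∂μ.toSphere.prod (Measure.volumeIoiPow (finrank ℝ E - 1)) := by
        rw [← μ.measurePreserving_homeomorphUnitSphereProd.lintegral_comp hm]
        simp only [hpolar]
    _ = _ := by
        rw [lintegral_prod _ hm.aemeasurable]
        refine lintegral_congr fun e => ?_
        rw [Measure.volumeIoiPow, lintegral_withDensity_eq_lintegral_mul _ (by fun_prop)
          (by exact hm.comp (measurable_const.prodMk measurable_id))]
        exact lintegral_subtype_comap measurableSet_Ioi
          fun r : ℝ => ENNReal.ofReal (r ^ (finrank ℝ E - 1)) * f (r • (e : E))

theorem enorm_mul_toSphere_univ_le_lintegral_fderiv {u : E → F} (hu : ContDiff ℝ 1 u)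
    (huc : HasCompactSupport u) (x : E) :
    ‖u x‖ₑ * μ.toSphere univ ≤
      ∫⁻ y, ‖fderiv ℝ u y‖ₑ * ENNReal.ofReal (‖y - x‖ ^ (-(finrank ℝ E - 1 : ℝ))) ∂μ := by
  have hm : Measurable fun z =>
      ‖fderiv ℝ u (x + z)‖ₑ * ENNReal.ofReal (‖z‖ ^ (-(finrank ℝ E - 1 : ℝ))) := by
    have := (hu.continuous_fderiv one_ne_zero).measurable
    fun_prop
  have hcancel : ∀ e : sphere (0 : E) 1, ∀ r ∈ Ioi (0 : ℝ),
      ‖fderiv ℝ u (x + r • (e : E))‖ₑ = ENNReal.ofReal (r ^ (finrank ℝ E - 1)) *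
        (‖fderiv ℝ u (x + r • (e : E))‖ₑ *
          ENNReal.ofReal (‖r • (e : E)‖ ^ (-(finrank ℝ E - 1 : ℝ)))) := by
    intro e r hr
    have hr0 : 0 < r := hr
    have hpow : r ^ (finrank ℝ E - 1) * r ^ (-(finrank ℝ E - 1 : ℝ)) = 1 := by
      rw [← Nat.cast_pred Module.finrank_pos, Real.rpow_neg hr0.le, Real.rpow_natCast]
      exact mul_inv_cancel₀ (by positivity)
    rw [norm_smul, norm_eq_of_mem_sphere, mul_one, Real.norm_of_nonneg hr0.le, mul_left_comm,
      ← ENNReal.ofReal_mul (by positivity), hpow, ENNReal.ofReal_one, mul_one]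
  calc ‖u x‖ₑ * μ.toSphere univ = ∫⁻ _ : sphere (0 : E) 1, ‖u x‖ₑ ∂μ.toSphere :=
        (lintegral_const _).symm
    _ ≤ ∫⁻ e : sphere (0 : E) 1,
          (∫⁻ r in Ioi (0 : ℝ), ‖fderiv ℝ u (x + r • (e : E))‖ₑ) ∂μ.toSphere :=
        lintegral_mono fun e =>
          enorm_le_lintegral_Ioi_fderiv_ray hu huc x (norm_eq_of_mem_sphere e)
    _ = ∫⁻ z, ‖fderiv ℝ u (x + z)‖ₑ * ENNReal.ofReal (‖z‖ ^ (-(finrank ℝ E - 1 : ℝ))) ∂μ := by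
        rw [lintegral_eq_lintegral_toSphere μ hm]
        exact lintegral_congr fun e => setLIntegral_congr_fun measurableSet_Ioi (hcancel e)
    _ = ∫⁻ y, ‖fderiv ℝ u y‖ₑ * ENNReal.ofReal (‖y - x‖ ^ (-(finrank ℝ E - 1 : ℝ))) ∂μ := by
        simpa only [add_sub_cancel_left] using lintegral_add_left_eq_self
          (fun y => ‖fderiv ℝ u y‖ₑ * ENNReal.ofReal (‖y - x‖ ^ (-(finrank ℝ E - 1 : ℝ)))) x

theorem integrableOn_ball_norm_rpow_neg {β : ℝ} (hβ : β < finrank ℝ E) (R : ℝ) :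
    IntegrableOn (fun x : E => ‖x‖ ^ (-β)) (ball 0 R) μ := by
  rw [integrableOn_fun_norm_addHaar μ (f := fun r : ℝ => r ^ (-β))]
  have hpow : IntegrableOn (fun r : ℝ => r ^ (finrank ℝ E - 1 - β)) (Ioo 0 R) :=
    ((intervalIntegral.intervalIntegrable_rpow' (by linarith)).1).mono_set Ioo_subset_Ioc_self
  refine hpow.congr_fun (fun r hr => ?_) measurableSet_Ioo
  simp only [smul_eq_mul]
  rw [← Real.rpow_natCast, ← Real.rpow_add hr.1, Nat.cast_pred Module.finrank_pos, ← sub_eq_add_neg]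

omit [Nontrivial E] in
theorem setIntegral_ball_norm_rpow_neg (β : ℝ) {R : ℝ} (hR : 0 < R) :
    ∫ x in ball (0 : E) R, ‖x‖ ^ (-β) ∂μ =
      R ^ (finrank ℝ E - β) * ∫ x in ball (0 : E) 1, ‖x‖ ^ (-β) ∂μ := by
  have hscale := μ.setIntegral_comp_smul_of_pos (fun x => ‖x‖ ^ (-β)) (ball (0 : E) 1) hR
  rw [smul_unitBall_of_pos hR] at hscale
  simp only [norm_smul, Real.norm_of_nonneg hR.le, Real.mul_rpow hR.le (norm_nonneg _),
    integral_const_mul, smul_eq_mul] at hscale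
  rw [sub_eq_add_neg, Real.rpow_add hR, Real.rpow_natCast, mul_assoc, hscale,
    mul_inv_cancel_left₀ (by positivity)]

theorem setLIntegral_norm_sub_rpow_neg_le {β : ℝ} (hβ0 : 0 ≤ β) (hβ : β < finrank ℝ E) (s : Set E)
    (x : E) {R : ℝ} (hR : 0 < R) :
    ∫⁻ y in s, ENNReal.ofReal (‖y - x‖ ^ (-β)) ∂μ ≤
      ENNReal.ofReal (∫ z in ball 0 R, ‖z‖ ^ (-β) ∂μ) + ENNReal.ofReal (R ^ (-β)) * μ s := by
  have hpt (z : E) : ENNReal.ofReal (‖z‖ ^ (-β)) ≤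
      (ball 0 R).indicator (fun z => ENNReal.ofReal (‖z‖ ^ (-β))) z +
        ENNReal.ofReal (R ^ (-β)) := by
    by_cases hz : z ∈ ball 0 R
    · rw [indicator_of_mem hz]
      exact le_self_add
    · have : R ≤ ‖z‖ := by simpa using hz
      rw [indicator_of_notMem hz, zero_add]
      exact ENNReal.ofReal_le_ofReal (Real.rpow_le_rpow_of_nonpos hR this (neg_nonpos.2 hβ0))
  calc ∫⁻ y in s, ENNReal.ofReal (‖y - x‖ ^ (-β)) ∂μ
      ≤ ∫⁻ y in s, ((ball 0 R).indicator (fun z => ENNReal.ofReal (‖z‖ ^ (-β))) (y - x) +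
          ENNReal.ofReal (R ^ (-β))) ∂μ := lintegral_mono fun y => hpt (y - x)
    _ = (∫⁻ y in s, (ball 0 R).indicator (fun z => ENNReal.ofReal (‖z‖ ^ (-β))) (y - x) ∂μ) +
          ENNReal.ofReal (R ^ (-β)) * μ s := by
        rw [lintegral_add_right _ measurable_const, setLIntegral_const]
    _ ≤ (∫⁻ y, (ball 0 R).indicator (fun z => ENNReal.ofReal (‖z‖ ^ (-β))) (y - x) ∂μ) +
          ENNReal.ofReal (R ^ (-β)) * μ s := by
        gcongr
        exact Measure.restrict_le_self
    _ = _ := by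
        rw [lintegral_sub_right_eq_self _ x, lintegral_indicator measurableSet_ball,
          ofReal_integral_eq_lintegral_ofReal (integrableOn_ball_norm_rpow_neg μ hβ R)
            (ae_of_all _ fun z => Real.rpow_nonneg (norm_nonneg z) _)]

theorem exists_setLIntegral_norm_sub_rpow_neg_le {β : ℝ} (hβ0 : 0 ≤ β) (hβ : β < finrank ℝ E) :
    ∃ C : ℝ≥0, ∀ (s : Set E) (x : E), μ s ≠ ⊤ →
      ∫⁻ y in s, ENNReal.ofReal (‖y - x‖ ^ (-β)) ∂μ ≤ C * μ s ^ (1 - β / finrank ℝ E) := by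
  have hn : (0 : ℝ) < finrank ℝ E := Nat.cast_pos.2 Module.finrank_pos
  refine ⟨(∫ z in ball (0 : E) 1, ‖z‖ ^ (-β) ∂μ).toNNReal + 1, fun s x hs => ?_⟩
  set J := ∫ z in ball (0 : E) 1, ‖z‖ ^ (-β) ∂μ
  rcases eq_or_ne (μ s) 0 with hs0 | hs0
  · rw [setLIntegral_measure_zero _ _ hs0]
    exact zero_le
  have hV : 0 < μ.real s := ENNReal.toReal_pos hs0 hs
  set R := μ.real s ^ (finrank ℝ E : ℝ)⁻¹
  have hR : 0 < R := Real.rpow_pos_of_pos hV _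
  have hRpow (t : ℝ) : ENNReal.ofReal (R ^ t) = μ s ^ (t / finrank ℝ E) := by
    rw [← Real.rpow_mul hV.le, inv_mul_eq_div, ← ENNReal.ofReal_rpow_of_pos hV,
      ofReal_measureReal hs]
  calc ∫⁻ y in s, ENNReal.ofReal (‖y - x‖ ^ (-β)) ∂μ
      ≤ ENNReal.ofReal (R ^ (finrank ℝ E - β) * J) + ENNReal.ofReal (R ^ (-β)) * μ s := by
        rw [← setIntegral_ball_norm_rpow_neg μ β hR]
        exact setLIntegral_norm_sub_rpow_neg_le μ hβ0 hβ s x hR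
    _ = (J.toNNReal + 1 : ℝ≥0) * μ s ^ (1 - β / finrank ℝ E) := by
        have hexp : 1 - β / finrank ℝ E = -β / finrank ℝ E + 1 := by ring
        rw [ENNReal.ofReal_mul (by positivity), hRpow, hRpow, sub_div, div_self hn.ne',
          ENNReal.coe_add, add_mul, ENNReal.coe_one, one_mul, mul_comm]
        congr 1
        rw [hexp, ENNReal.rpow_add _ _ hs0 hs, ENNReal.rpow_one]

theorem enorm_mul_toSphere_univ_le_lintegral_rpow_mul {u : E → F} {s : Set E} {q r : ℝ}
    (hqr : q.HolderConjugate r) (hu : ContDiff ℝ 1 u) (huc : HasCompactSupport u)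
    (hus : tsupport u ⊆ s) (x : E) :
    ‖u x‖ₑ * μ.toSphere univ ≤ (∫⁻ y in s, ‖fderiv ℝ u y‖ₑ ^ q ∂μ) ^ (1 / q) *
      (∫⁻ y in s, ENNReal.ofReal (‖y - x‖ ^ (-((finrank ℝ E - 1 : ℝ) * r))) ∂μ) ^ (1 / r) := by
  have : Continuous (fderiv ℝ u) := hu.continuous_fderiv one_ne_zero
  set w := fun y => ENNReal.ofReal (‖y - x‖ ^ (-(finrank ℝ E - 1 : ℝ)))
  have hw (y : E) : w y ^ r = ENNReal.ofReal (‖y - x‖ ^ (-((finrank ℝ E - 1 : ℝ) * r))) := by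
    rw [ENNReal.ofReal_rpow_of_nonneg (by positivity) hqr.symm.nonneg,
      ← Real.rpow_mul (by positivity), neg_mul]
  have hsupp : (Function.support fun y => ‖fderiv ℝ u y‖ₑ * w y) ⊆ s := by
    refine Function.support_subset_iff'.2 fun y hy => mul_eq_zero_of_left ?_ _
    rw [← ofReal_norm, fderiv_of_notMem_tsupport ℝ fun h => hy (hus h), norm_zero,
      ENNReal.ofReal_zero]
  calc ‖u x‖ₑ * μ.toSphere univ ≤ ∫⁻ y, ‖fderiv ℝ u y‖ₑ * w y ∂μ :=
        enorm_mul_toSphere_univ_le_lintegral_fderiv μ hu huc x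
    _ = ∫⁻ y in s, ‖fderiv ℝ u y‖ₑ * w y ∂μ := (setLIntegral_eq_of_support_subset hsupp).symm
    _ ≤ (∫⁻ y in s, ‖fderiv ℝ u y‖ₑ ^ q ∂μ) ^ (1 / q) * (∫⁻ y in s, w y ^ r ∂μ) ^ (1 / r) :=
        ENNReal.lintegral_mul_le_Lp_mul_Lq _ hqr (by fun_prop) (by fun_prop)
    _ = _ := by simp only [hw]

theorem exists_enorm_le_rpow_mul_lintegral_fderiv_rpow (F : Type*) [NormedAddCommGroup F]
    [NormedSpace ℝ F] {q : ℝ} (hq : finrank ℝ E < q) :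
    ∃ C : ℝ≥0, ∀ {u : E → F} {s : Set E}, ContDiff ℝ 1 u → HasCompactSupport u → tsupport u ⊆ s →
      μ s ≠ ⊤ → ∀ x, ‖u x‖ₑ ≤ C * μ s ^ (1 / (finrank ℝ E : ℝ) - 1 / q) *
        (∫⁻ y in s, ‖fderiv ℝ u y‖ₑ ^ q ∂μ) ^ (1 / q) := by
  have hn : (1 : ℝ) ≤ finrank ℝ E := by exact_mod_cast Module.finrank_pos
  have hconj : q.HolderConjugate q.conjExponent := .conjExponent (hn.trans_lt hq)
  set r := q.conjExponent
  have hr : 0 < r := hconj.symm.pos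
  obtain ⟨C, hC⟩ := exists_setLIntegral_norm_sub_rpow_neg_le μ
    (mul_nonneg (sub_nonneg.2 hn) hr.le) (sub_one_mul_conjExponent_lt hn hq)
  set σ := μ.toSphere univ with hσ_def
  have hσ0 : σ ≠ 0 := by
    rw [hσ_def, Ne, Measure.measure_univ_eq_zero]
    exact Measure.toSphere_ne_zero _
  have hσ : σ ≠ ⊤ := measure_ne_top _ _
  refine ⟨C ^ (1 / r) / σ.toNNReal, fun {u s} hu huc hus hs x => ?_⟩
  rw [ENNReal.coe_div (ENNReal.toNNReal_ne_zero.2 ⟨hσ0, hσ⟩), ENNReal.coe_toNNReal hσ,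
    ← ENNReal.mul_div_right_comm, ← ENNReal.mul_div_right_comm,
    ENNReal.le_div_iff_mul_le (.inl hσ0) (.inl hσ)]
  calc ‖u x‖ₑ * σ ≤ (∫⁻ y in s, ‖fderiv ℝ u y‖ₑ ^ q ∂μ) ^ (1 / q) *
          (∫⁻ y in s, ENNReal.ofReal (‖y - x‖ ^ (-((finrank ℝ E - 1) * r))) ∂μ) ^ (1 / r) :=
        enorm_mul_toSphere_univ_le_lintegral_rpow_mul μ hconj hu huc hus x
    _ ≤ (∫⁻ y in s, ‖fderiv ℝ u y‖ₑ ^ q ∂μ) ^ (1 / q) *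
          (C * μ s ^ (1 - (finrank ℝ E - 1) * r / finrank ℝ E)) ^ (1 / r) := by
        gcongr
        exact hC s x hs
    _ = _ := by
        rw [ENNReal.mul_rpow_of_nonneg _ _ (by positivity), ← ENNReal.rpow_mul,
          one_sub_conjExponent_mul_div (by positivity) (hn.trans_lt hq),
          ENNReal.coe_rpow_of_nonneg _ (by positivity)]
        ring

theorem exists_norm_le_rpow_mul_integral_fderiv_rpow (F : Type*) [NormedAddCommGroup F]
    [NormedSpace ℝ F] {q : ℝ} (hq : finrank ℝ E < q) :
    ∃ C ≥ 0, ∀ {u : E → F} {s : Set E}, ContDiff ℝ 1 u → HasCompactSupport u → tsupport u ⊆ s →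
      μ s ≠ ⊤ → ∀ x, ‖u x‖ ≤ C * μ.real s ^ (1 / (finrank ℝ E : ℝ) - 1 / q) *
        (∫ y in s, ‖fderiv ℝ u y‖ ^ q ∂μ) ^ (1 / q) := by
  obtain ⟨C, hC⟩ := exists_enorm_le_rpow_mul_lintegral_fderiv_rpow μ F hq
  refine ⟨C, C.2, fun {u s} hu huc hus hs x => ?_⟩
  have hn : (0 : ℝ) < finrank ℝ E := Nat.cast_pos.2 Module.finrank_pos
  have hq0 : 0 < q := hn.trans hq
  have hexp : 0 ≤ 1 / (finrank ℝ E : ℝ) - 1 / q := sub_nonneg.2 (one_div_le_one_div_of_le hn hq.le)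
  have hint : IntegrableOn (fun y => ‖fderiv ℝ u y‖ ^ q) s μ :=
    (integrable_norm_rpow_of_hasCompactSupport (hu.continuous_fderiv one_ne_zero) (huc.fderiv ℝ)
      hq0).integrableOn
  have hI : ∫⁻ y in s, ‖fderiv ℝ u y‖ₑ ^ q ∂μ =
      ENNReal.ofReal (∫ y in s, ‖fderiv ℝ u y‖ ^ q ∂μ) := by
    rw [ofReal_integral_eq_lintegral_ofReal hint (ae_of_all _ fun y => by positivity)]
    simp only [← ENNReal.ofReal_rpow_of_nonneg (norm_nonneg _) hq0.le, ofReal_norm]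
  have hbound := hC hu huc hus hs x
  rw [hI] at hbound
  have := ENNReal.toReal_mono (by finiteness) hbound
  rwa [ENNReal.toReal_mul, ENNReal.toReal_mul, ← ENNReal.toReal_rpow, ← ENNReal.toReal_rpow,
    ENNReal.toReal_ofReal (integral_nonneg fun y => by positivity), toReal_enorm,
    ENNReal.coe_toReal] at this

end Potential

theorem exists_integral_rpow_le_mul_hardyDifference_rpow (n : ℕ) {p q : ℝ} (hq : 1 < q)
    (hqp : q < p) :
    ∃ C ≥ 0, ∀ {d u : EuclideanSpace ℝ (Fin n) → ℝ} {Ω : Set (EuclideanSpace ℝ (Fin n))},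
      IsHardyWeight d Ω → IsOpen Ω → volume Ω ≠ ⊤ → ContDiff ℝ 1 u → HasCompactSupport u →
      tsupport u ⊆ Ω → 0 ≤ hardyDifference p d Ω u ∧
        ∫ y in Ω, ‖fderiv ℝ u y‖ ^ q ≤
          C * volume.real Ω ^ (1 - q / p) * hardyDifference p d Ω u ^ (q / p) := by
  obtain ⟨c, hc, A, hA, hbound⟩ := exists_mul_integral_rpow_le_hardyDifference_add n hq hqp
  have hq0 : 0 < q := by positivity
  have hp0 : 0 < p := hq0.trans hqp
  refine ⟨2 * A ^ (1 - q / p) / c, by positivity, fun {d u Ω} hd hΩ hvol hu huc huΩ => ?_⟩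
  set J := ∫ y in Ω, ‖fderiv ℝ u y‖ ^ q
  have hscale : ∀ l > 0, l ^ q * (c * J) ≤ l ^ p * hardyDifference p d Ω u + A * volume.real Ω := by
    intro l hl
    have hsupp : tsupport (l • u) ⊆ tsupport u :=
      closure_mono (Function.support_const_smul_subset l u)
    have h := hbound (u := l • u) hd hΩ hvol (hu.const_smul l)
      (huc.of_isClosed_subset (isClosed_tsupport _) hsupp) (hsupp.trans huΩ)
    simp only [hardyDifference_const_smul, fderiv_const_smul_field, Pi.smul_apply, norm_smul,
      Real.norm_eq_abs, abs_of_pos hl, Real.mul_rpow hl.le (norm_nonneg _), integral_const_mul]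
      at h
    rwa [mul_left_comm]
  have hJ0 : 0 ≤ c * J := mul_nonneg hc.le (integral_nonneg fun y => by positivity)
  refine ⟨nonneg_of_forall_rpow_mul_le hp0 hJ0 hscale, ?_⟩
  have hJle := le_mul_rpow_of_forall_rpow_mul_le hq0 hqp hJ0 (by positivity) hscale
  rw [Real.mul_rpow hA measureReal_nonneg] at hJle
  rw [div_mul_eq_mul_div, div_mul_eq_mul_div, le_div_iff₀ hc]
  linarith

theorem exists_abs_le_mul_hardyDifference_rpow {n : ℕ} (hn : 1 ≤ n) {p : ℝ} (hp : n < p) :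
    ∃ C > 0, ∀ {d u : EuclideanSpace ℝ (Fin n) → ℝ} {Ω : Set (EuclideanSpace ℝ (Fin n))},
      IsHardyWeight d Ω → IsOpen Ω → volume Ω ≠ ⊤ → ContDiff ℝ 1 u → HasCompactSupport u →
      tsupport u ⊆ Ω → ∀ x, |u x| ≤
        C * volume.real Ω ^ (1 / (n : ℝ) - 1 / p) * hardyDifference p d Ω u ^ (1 / p) := by
  have : NeZero n := ⟨by lia⟩
  have hn1 : (1 : ℝ) ≤ n := by exact_mod_cast hn
  obtain ⟨q, hnq, hqp⟩ := exists_between hp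
  have hq : 1 < q := hn1.trans_lt hnq
  obtain ⟨A, hA, hhardy⟩ := exists_integral_rpow_le_mul_hardyDifference_rpow n hq hqp
  obtain ⟨B, hB, hmorrey⟩ := exists_norm_le_rpow_mul_integral_fderiv_rpow
    (volume : Measure (EuclideanSpace ℝ (Fin n))) ℝ (q := q) (by simpa using hnq)
  refine ⟨B * A ^ (1 / q) + 1, by positivity, fun {d u Ω} hd hΩ hvol hu huc huΩ x => ?_⟩
  obtain ⟨hI, hgrad⟩ := hhardy hd hΩ hvol hu huc huΩ
  set I := hardyDifference p d Ω u
  set V := volume.real Ω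
  have hp0 : 0 < p := by linarith
  have hexp : (1 / (n : ℝ) - 1 / q) + (1 - q / p) * (1 / q) = 1 / n - 1 / p := by
    field_simp
    ring
  calc |u x| ≤ B * V ^ (1 / (n : ℝ) - 1 / q) * (∫ y in Ω, ‖fderiv ℝ u y‖ ^ q) ^ (1 / q) := by
        simpa using hmorrey hu huc huΩ hvol x
    _ ≤ B * V ^ (1 / (n : ℝ) - 1 / q) * (A * V ^ (1 - q / p) * I ^ (q / p)) ^ (1 / q) := by
        gcongr
    _ = B * A ^ (1 / q) * V ^ (1 / (n : ℝ) - 1 / p) * I ^ (1 / p) := by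
        rw [Real.mul_rpow (by positivity) (by positivity), Real.mul_rpow hA (by positivity),
          ← Real.rpow_mul hI, ← Real.rpow_mul measureReal_nonneg, ← hexp,
          Real.rpow_add_of_nonneg measureReal_nonneg]
        · rw [show q / p * (1 / q) = 1 / p by field_simp]
          ring
        · exact sub_nonneg.2 (one_div_le_one_div_of_le (by positivity) hnq.le)
        · exact mul_nonneg (sub_nonneg.2 ((div_le_one hp0).2 hqp.le)) (by positivity)
    _ ≤ (B * A ^ (1 / q) + 1) * V ^ (1 / (n : ℝ) - 1 / p) * I ^ (1 / p) := by
        gcongr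
        exact le_add_of_nonneg_right zero_le_one

theorem isHardyWeight_infDist_compl {n : ℕ} {Ω : Set (EuclideanSpace ℝ (Fin n))} (hΩ : IsOpen Ω)
    (hΩ' : Ω ≠ univ) (h : DistribSuperharmonicOn (infDist · Ωᶜ) Ω) :
    IsHardyWeight (infDist · Ωᶜ) Ω where
  superharmonic := h
  lipschitz := ⟨1, lipschitz_infDist_pt _⟩
  nonneg _ := infDist_nonneg
  ne_zero _ hx := ((hΩ.isClosed_compl.notMem_iff_infDist_pos (nonempty_compl.2 hΩ')).1
    (notMem_compl_iff.2 hx)).ne'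
  norm_fderiv := by
    filter_upwards [(lipschitz_infDist_pt Ωᶜ).ae_differentiableAt] with x hdx hx
    exact norm_fderiv_infDist hΩ.isClosed_compl (nonempty_compl.2 hΩ') (notMem_compl_iff.2 hx) hdx

theorem hardy_sobolev_boundary_general {n : ℕ} (hn : 1 ≤ n) {p : ℝ} (hp : n < p) :
    ∃ C > 0, ∀ {Ω : Set (EuclideanSpace ℝ (Fin n))}, IsOpen Ω → volume Ω ≠ ⊤ →
      DistribSuperharmonicOn (infDist · Ωᶜ) Ω → ∀ {u : EuclideanSpace ℝ (Fin n) → ℝ},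
        ContDiff ℝ 1 u → HasCompactSupport u → tsupport u ⊆ Ω → ∀ x, |u x| ≤
          C * volume.real Ω ^ (1 / (n : ℝ) - 1 / p) *
            hardyDifference p (infDist · Ωᶜ) Ω u ^ (1 / p) := by
  have : NeZero n := ⟨by lia⟩
  obtain ⟨C, hC, hbound⟩ := exists_abs_le_mul_hardyDifference_rpow hn hp
  refine ⟨C, hC, fun {Ω} hΩ hvol hsup {u} hu huc huΩ x => ?_⟩
  have hΩ' : Ω ≠ univ := by
    rintro rfl
    exact hvol (measure_univ_of_isAddLeftInvariant _)
  exact hbound (isHardyWeight_infDist_compl hΩ hΩ' hsup) hΩ hvol hu huc huΩ x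

/-- Hardy–Sobolev inequality for `p > n`, distance to the boundary,
under the condition `−Δd ≥ 0` in the sense of distributions. -/
theorem hardy_sobolev_boundary (n : ℕ) (hn : 1 ≤ n) (p : ℝ) (hp : (n : ℝ) < p) :
    ∃ C : ℝ, 0 < C ∧
      ∀ Ω : Set (EuclideanSpace ℝ (Fin n)), IsOpen Ω → IsConnected Ω →
        Ω ≠ Set.univ → volume Ω ≠ ⊤ →
        (∀ φ : EuclideanSpace ℝ (Fin n) → ℝ, ContDiff ℝ (⊤ : ℕ∞) φ →
          HasCompactSupport φ → tsupport φ ⊆ Ω → (∀ z, 0 ≤ φ z) →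
          (∫ x in Ω, Metric.infDist x Ωᶜ * lapl φ x) ≤ 0) →
        ∀ u : EuclideanSpace ℝ (Fin n) → ℝ, ContDiff ℝ (⊤ : ℕ∞) u →
          HasCompactSupport u → tsupport u ⊆ Ω →
          ∀ x ∈ Ω, |u x| ≤
            C * (volume Ω).toReal ^ (1 / (n : ℝ) - 1 / p) *
              ((∫ y in Ω, ‖fderiv ℝ u y‖ ^ p)
                - ((p - 1) / p) ^ p *
                    ∫ y in Ω, |u y| ^ p / (Metric.infDist y Ωᶜ) ^ p) ^ (1 / p) := by
  obtain ⟨C, hC, hbound⟩ := hardy_sobolev_boundary_general hn hp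
  exact ⟨C, hC, fun Ω hΩ _ _ hvol hsup u hu huc huΩ x _ =>
    hbound hΩ hvol hsup (hu.of_le (by norm_cast)) huc huΩ x⟩
end
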